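/- Assume Conjecture 2.1 holds for all finite groups. Then: for every finite group G, every normal subgroup N ⊴ G, every irreducible complex character θ of N, every irreducible complex character χ of G lying over θ (i.e. θ is an irreducible constituent of the restriction χ|_N), and every g ∈ G such that χ(gn) ≠ 0 for some n ∈ N, the order of the coset gN in G/N divides |G:N|·θ(1)/χ(1); equivalently, o(gN)·χ(1) divides |G:N|·θ(1) (note that χ(1)/θ(1) divides |G:N|, so |G:N|·θ(1)/χ(1) is an integer). -/

import Mathlib

/-- The solvable residual `G^(∞)` of a group `G`: for finite `G` this is the stable term
of the derived series, here realised as the intersection of all terms of the derived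
series. -/
def solvableResidual (G : Type*) [Group G] : Subgroup G :=
  ⨅ n : ℕ, derivedSeries G n

/-- **Conjecture 2.1.** For every finite group `G` such that `G/Z(G)` has a normal
subgroup `S̄` which is nonabelian simple and has trivial centralizer in `G/Z(G)`, every
faithful irreducible complex character `χ` of `G` whose restriction to `G^(∞)` is
irreducible, and every `g ∈ G` with `χ(g) ≠ 0` and `G = ⟨G^(∞), Z(G), g⟩`, one has
`o(gZ(G))·χ(1) ∣ |G : Z(G)|`. -/
def Conjecture21 : Prop :=
  ∀ (G : Type) [Group G] [Finite G],
    (∃ S : Subgroup (G ⧸ Subgroup.center G), S.Normal ∧ IsSimpleGroup ↥S ∧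
      (∃ a b : ↥S, a * b ≠ b * a) ∧
      Subgroup.centralizer (S : Set (G ⧸ Subgroup.center G)) = ⊥) →
    ∀ (V : FDRep ℂ G), CategoryTheory.Simple V → Function.Injective V.ρ →
      CategoryTheory.Simple (FDRep.of (V.ρ.comp (solvableResidual G).subtype)) →
      ∀ g : G, V.character g ≠ 0 →
        solvableResidual G ⊔ Subgroup.center G ⊔ Subgroup.zpowers g = ⊤ →
        orderOf (QuotientGroup.mk g : G ⧸ Subgroup.center G) * Module.finrank ℂ V ∣
          (Subgroup.center G).index

/-!
By Clifford theory, over the stabilizer of the `θ`-isotypic component of `χ` the character splits as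
a product of projective characters, one of which extends `θ`; this reduces the theorem to the case
where `N` acts by scalars in the representation `ρ` affording `χ`, which is settled by induction on
`|G : N|`.

Suppose the divisibility fails. Then induction shows that every normal subgroup `M` properly
containing `N` acts irreducibly and satisfies `M⟨g⟩ = G`; in particular `N` consists of all elements
acting by scalars, unless `χ(1) = 1`. Take `M/N` minimal normal in `G/N`.

* If `M/N` is abelian, coset representatives of `N` in `M` act as a basis of the space of all
  operators, so `|M : N| = χ(1)²`. As `M/N` has some prime exponent `p`, both `p ∣ χ(1)` and
  `o(gN) ∣ |G : M| p`.
* Otherwise `M/N` has trivial centralizer. If it is not simple, let `K/N` be a simple factor of it,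
  `H` the normalizer and `L` the centralizer of `K/N`, and `r = |G : H|`. Since `K/N` commutes with
  its other conjugates, averaging over it gives `l ∈ L` with `χ(g ^ r l) ≠ 0`. As `⟨g⟩ ∩ L ≤ N`, the
  induction hypothesis for `N ≤ L ≤ H` yields `o(g ^ r N) χ(1) ∣ |H : N|`.
* If `M/N` is simple, the pairs `(xN, u)` with `u` a scalar multiple of `ρ x` of determinant `1`
  form a finite group with center of index `|G : N|`, to which the conjecture applies.
-/

namespace CosetDivisibility

open Module
open scoped commutatorElement TensorProduct

/-! ### Stable subspaces -/

section StableSubspaces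

variable {k G V : Type*} [Field k] [Group G] [AddCommGroup V] [Module k V]

/-- The subspace `U` is mapped into itself by every element of the subgroup `S`. -/
def IsStable (ρ : Representation k G V) (S : Subgroup G) (U : Submodule k V) : Prop :=
  ∀ x ∈ S, ∀ v ∈ U, ρ x v ∈ U

/-- `U` is a minimal nonzero `S`-stable subspace, i.e. an irreducible subrepresentation of the
restriction of `ρ` to `S`. In particular `IsMinimalStable ρ S ⊤` says that this restriction is
irreducible; keeping `S` a subgroup of `G` avoids passing to the representation `ρ|_S`. -/
structure IsMinimalStable (ρ : Representation k G V) (S : Subgroup G) (U : Submodule k V) :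
    Prop where
  ne_bot : U ≠ ⊥
  isStable : IsStable ρ S U
  eq_of_le : ∀ U' ≤ U, IsStable ρ S U' → U' ≠ ⊥ → U' = U

/-- Every element of `S` acts on `V` as a scalar. -/
def ActsByScalars (ρ : Representation k G V) (S : Subgroup G) : Prop :=
  ∀ x ∈ S, ∃ c : k, ρ x = c • 1

variable {ρ : Representation k G V} {S : Subgroup G} {U : Submodule k V}

lemma isStable_top : IsStable ρ S ⊤ := fun _ _ _ _ => Submodule.mem_top

lemma IsStable.mono {S' : Subgroup G} (hU : IsStable ρ S' U) (hS : S ≤ S') : IsStable ρ S U :=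
  fun x hx => hU x (hS hx)

lemma IsStable.map_eq (hU : IsStable ρ S U) {x : G} (hx : x ∈ S) : U.map (ρ x) = U := by
  refine le_antisymm (Submodule.map_le_iff_le_comap.2 (hU x hx)) fun v hv => ?_
  exact ⟨ρ x⁻¹ v, hU x⁻¹ (S.inv_mem hx) v hv, ρ.self_inv_apply x v⟩

lemma IsMinimalStable.eq_top (h : IsMinimalStable ρ S ⊤) (hU : IsStable ρ S U) (hne : U ≠ ⊥) :
    U = ⊤ :=
  h.eq_of_le U le_top hU hne

lemma IsMinimalStable.nontrivial (h : IsMinimalStable ρ S U) : Nontrivial V :=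
  let ⟨v, _, hv⟩ := U.exists_mem_ne_zero_of_ne_bot h.ne_bot
  ⟨v, 0, hv⟩

lemma IsMinimalStable.finrank_pos [FiniteDimensional k V] (h : IsMinimalStable ρ S U) :
    0 < finrank k U :=
  Nat.pos_of_ne_zero fun h0 => h.ne_bot (Submodule.finrank_eq_zero.1 h0)

lemma IsMinimalStable.top_of_le {S' : Subgroup G} (h : IsMinimalStable ρ S ⊤) (hS : S ≤ S') :
    IsMinimalStable ρ S' ⊤ :=
  ⟨h.ne_bot, isStable_top, fun _ _ hU hne => h.eq_top (hU.mono hS) hne⟩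

variable (ρ S) in
lemma exists_isMinimalStable_le [FiniteDimensional k V] (hne : U ≠ ⊥) (hU : IsStable ρ S U) :
    ∃ W ≤ U, IsMinimalStable ρ S W := by
  obtain ⟨W, ⟨hWU, hW, hWS⟩, hmin⟩ := (wellFounded_lt (α := Submodule k V)).has_min
    {W | W ≤ U ∧ W ≠ ⊥ ∧ IsStable ρ S W} ⟨U, le_rfl, hne, hU⟩
  refine ⟨W, hWU, hW, hWS, fun W' hle hst hne' => ?_⟩
  exact eq_of_le_of_not_lt hle (hmin W' ⟨hle.trans hWU, hne', hst⟩)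

lemma IsStable.map_of_normal {N : Subgroup G} [N.Normal] (hU : IsStable ρ N U) (y : G) :
    IsStable ρ N (U.map (ρ y)) := by
  rintro x hx _ ⟨u, hu, rfl⟩
  have hyx : y⁻¹ * x * y ∈ N := by simpa using ‹N.Normal›.conj_mem x hx y⁻¹
  refine ⟨ρ (y⁻¹ * x * y) u, hU _ hyx u hu, ?_⟩
  simp only [map_mul, Module.End.mul_apply, Representation.self_inv_apply]

variable (ρ) in
/-- The action of `G` on the subspaces of `V` by translation. -/
@[reducible] def submoduleAction : MulAction G (Submodule k V) where
  smul g U := U.map (ρ g)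
  one_smul U := (congrArg U.map (map_one ρ)).trans (Submodule.map_id U)
  mul_smul x y U := (congrArg U.map (map_mul ρ x y)).trans (Submodule.map_comp _ _ U)

lemma map_mul_eq_map_map (x y : G) (U : Submodule k V) :
    U.map (ρ (x * y)) = (U.map (ρ y)).map (ρ x) :=
  letI := submoduleAction ρ
  mul_smul x y U

lemma map_inv_map (y : G) (U : Submodule k V) : (U.map (ρ y)).map (ρ y⁻¹) = U :=
  letI := submoduleAction ρ
  inv_smul_smul y U

lemma map_ne_bot (y : G) (hU : U ≠ ⊥) : U.map (ρ y) ≠ ⊥ :=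
  fun h => hU (by rw [← map_inv_map y U, h, Submodule.map_bot])

lemma IsMinimalStable.map_of_normal {N : Subgroup G} [N.Normal] (h : IsMinimalStable ρ N U)
    (y : G) : IsMinimalStable ρ N (U.map (ρ y)) := by
  refine ⟨map_ne_bot y h.ne_bot, h.isStable.map_of_normal y, fun U' hle hU' hne => ?_⟩
  have hback : U'.map (ρ y⁻¹) = U :=
    h.eq_of_le _ ((Submodule.map_mono hle).trans_eq (map_inv_map y U)) (hU'.map_of_normal y⁻¹)
      (map_ne_bot y⁻¹ hne)
  rw [← hback, ← map_inv_map y⁻¹ U', inv_inv, map_inv_map]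

lemma finrank_map_apply (y : G) (U : Submodule k V) :
    finrank k (U.map (ρ y)) = finrank k U :=
  (Submodule.equivMapOfInjective (ρ y) (ρ.apply_bijective y).injective U).finrank_eq.symm

end StableSubspaces

section RestrictToSubspace

variable {k G V : Type*} [Field k] [Group G] [AddCommGroup V] [Module k V]
  {ρ : Representation k G V} {S : Subgroup G} {U : Submodule k V}

/-- The representation of `S` on an `S`-stable subspace. -/
def IsStable.representation (hU : IsStable ρ S U) : Representation k S U where
  toFun x := (ρ x).restrict (hU x x.2)
  map_one' := by ext v; simp
  map_mul' x y := by ext v; simp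

@[simp] lemma IsStable.coe_representation_apply (hU : IsStable ρ S U) (x : S) (u : U) :
    (hU.representation x u : V) = ρ x u := rfl

lemma IsMinimalStable.isMinimalStable_representation (h : IsMinimalStable ρ S U) :
    IsMinimalStable h.isStable.representation ⊤ ⊤ where
  ne_bot := by
    have : Nontrivial U := Submodule.nontrivial_iff_ne_bot.2 h.ne_bot
    exact top_ne_bot
  isStable := isStable_top
  eq_of_le U' _ hU' hne := by
    have hinj := Submodule.map_injective_of_injective U.injective_subtype
    have hmap : U'.map U.subtype = U := by
      refine h.eq_of_le _ (Submodule.map_subtype_le _ _) ?_ ?_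
      · rintro x hx _ ⟨u, hu, rfl⟩
        exact ⟨_, hU' ⟨x, hx⟩ trivial u hu, rfl⟩
      · exact fun h0 => hne (hinj (h0.trans (Submodule.map_bot _).symm))
    exact hinj (hmap.trans (Submodule.map_subtype_top U).symm)

lemma isMinimalStable_comp_subtype_iff {H L : Subgroup G} (hLH : L ≤ H) :
    IsMinimalStable (ρ.comp H.subtype) (L.subgroupOf H) U ↔ IsMinimalStable ρ L U := by
  have hst (U' : Submodule k V) :
      IsStable (ρ.comp H.subtype) (L.subgroupOf H) U' ↔ IsStable ρ L U' :=
    ⟨fun h x hx => h ⟨x, hLH hx⟩ hx, fun h x hx => h x hx⟩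
  exact ⟨fun ⟨h₁, h₂, h₃⟩ => ⟨h₁, (hst U).1 h₂, fun U' hle h => h₃ U' hle ((hst U').2 h)⟩,
    fun ⟨h₁, h₂, h₃⟩ => ⟨h₁, (hst U).2 h₂, fun U' hle h => h₃ U' hle ((hst U').1 h)⟩⟩

end RestrictToSubspace

section EnvelopingAlgebra

variable {k G V : Type*} [Field k] [Group G] [AddCommGroup V] [Module k V]

/-- The subalgebra of `End V` generated by the operators `ρ x` with `x ∈ S`. It turns stable
subspaces into submodules, so that the theory of isotypic components applies. -/
abbrev envelope (ρ : Representation k G V) (S : Subgroup G) : Subalgebra k (Module.End k V) :=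
  Algebra.adjoin k (ρ '' (S : Set G))

variable {ρ : Representation k G V} {S : Subgroup G} {U : Submodule k V}

lemma apply_mem_envelope {x : G} (hx : x ∈ S) : ρ x ∈ envelope ρ S :=
  Algebra.subset_adjoin ⟨x, hx, rfl⟩

variable (ρ S) in
lemma toSubmodule_envelope :
    Subalgebra.toSubmodule (envelope ρ S) = Submodule.span k (ρ '' (S : Set G)) := by
  rw [Algebra.adjoin_eq_span]
  exact congrArg (fun A : Submonoid (Module.End k V) => Submodule.span k (A : Set (Module.End k V)))
    (Submonoid.closure_eq (S.toSubmonoid.map ρ))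

lemma IsStable.envelope_apply_mem (hU : IsStable ρ S U) {a : Module.End k V}
    (ha : a ∈ envelope ρ S) {v : V} (hv : v ∈ U) : a v ∈ U := by
  rw [← Subalgebra.mem_toSubmodule, toSubmodule_envelope] at ha
  have hle : Submodule.span k (ρ '' (S : Set G)) ≤ U.comap (LinearMap.applyₗ v) := by
    rw [Submodule.span_le]
    rintro _ ⟨x, hx, rfl⟩
    exact hU x hx v hv
  exact hle ha

/-- An `S`-stable subspace, viewed as a submodule over the enveloping algebra. -/
def IsStable.toEnvelope (hU : IsStable ρ S U) : Submodule (envelope ρ S) V where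
  __ := U.toAddSubmonoid
  smul_mem' a _ hv := hU.envelope_apply_mem a.2 hv

lemma IsStable.mem_toEnvelope (hU : IsStable ρ S U) {v : V} : v ∈ hU.toEnvelope ↔ v ∈ U :=
  Iff.rfl

lemma isStable_restrictScalars (B : Submodule (envelope ρ S) V) :
    IsStable ρ S (B.restrictScalars k) :=
  fun x hx _ hv => B.smul_mem ⟨ρ x, apply_mem_envelope hx⟩ hv

lemma IsMinimalStable.isSimpleModule (h : IsMinimalStable ρ S U) :
    IsSimpleModule (envelope ρ S) h.isStable.toEnvelope := by
  rw [isSimpleModule_iff_isAtom]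
  refine ⟨fun h0 => h.ne_bot ?_, fun B hB => by_contra fun hne => hB.not_ge ?_⟩
  · rw [Submodule.eq_bot_iff]
    intro v hv
    rwa [← h.isStable.mem_toEnvelope, h0] at hv
  · have hBU : B.restrictScalars k = U :=
      h.eq_of_le _ hB.le (isStable_restrictScalars B) (by simpa using hne)
    exact hBU.ge

end EnvelopingAlgebra

section SchurBurnside

variable {k G V : Type*} [Field k] [IsAlgClosed k] [Group G] [AddCommGroup V] [Module k V]
  [FiniteDimensional k V] {ρ : Representation k G V} {S : Subgroup G}

lemma IsMinimalStable.exists_eq_smul_one (h : IsMinimalStable ρ S ⊤) (T : V →ₗ[k] V)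
    (hT : ∀ x ∈ S, T * ρ x = ρ x * T) : ∃ c : k, T = c • 1 := by
  have := h.nontrivial
  obtain ⟨c, hc⟩ := Module.End.exists_eigenvalue T
  have htop : Module.End.eigenspace T c = ⊤ := by
    refine h.eq_top (fun x hx v hv => ?_) hc
    rw [Module.End.mem_eigenspace_iff] at hv ⊢
    rw [← Module.End.mul_apply, hT x hx, Module.End.mul_apply, hv, map_smul]
  refine ⟨c, LinearMap.ext fun v => ?_⟩
  have hv : v ∈ Module.End.eigenspace T c := htop ▸ Submodule.mem_top
  simpa using Module.End.mem_eigenspace_iff.1 hv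

lemma IsMinimalStable.span_image_eq_top (h : IsMinimalStable ρ S ⊤) :
    Submodule.span k (ρ '' (S : Set G)) = ⊤ := by
  rw [← toSubmodule_envelope, eq_top_iff]
  intro T _
  have htop : h.isStable.toEnvelope = ⊤ := eq_top_iff.2 fun v _ => Submodule.mem_top (x := v)
  have : IsSimpleModule (envelope ρ S) V :=
    (LinearEquiv.isSimpleModule_iff Submodule.topEquiv).1 (htop ▸ h.isSimpleModule)
  -- By Schur's lemma `T` commutes with the commutant of the envelope, so density applies to it.
  let f : Module.End (Module.End (envelope ρ S) V) V :=
    { T with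
      map_smul' φ v := by
        obtain ⟨c, hc⟩ := h.exists_eq_smul_one (φ.restrictScalars k) fun x hx =>
          LinearMap.ext fun v => φ.map_smul ⟨ρ x, apply_mem_envelope hx⟩ v
        have hφ (v : V) : φ v = c • v := LinearMap.congr_fun hc v
        simp [hφ] }
  obtain ⟨s, hs⟩ := Module.Finite.fg_top (R := k) (M := V)
  obtain ⟨a, ha⟩ := jacobson_density f s
  have hTa : T = a := LinearMap.ext_on (s := (s : Set V)) hs ha
  exact hTa ▸ a.2

end SchurBurnside

/-! ### Clifford theory -/

section ImprimitivitySystems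

lemma exists_trace_restrict_ne_zero_of_isInternal {k V ι : Type*} [Field k] [AddCommGroup V]
    [Module k V] [FiniteDimensional k V] [Finite ι] [DecidableEq ι] {A : ι → Submodule k V}
    (hA : DirectSum.IsInternal A) {f : V →ₗ[k] V} {σ : ι → ι}
    (hf : ∀ i, ∀ v ∈ A i, f v ∈ A (σ i)) (htr : LinearMap.trace k V f ≠ 0) :
    ∃ i, ∃ hi : ∀ v ∈ A i, f v ∈ A i, LinearMap.trace k (A i) (f.restrict hi) ≠ 0 := by
  classical
  have := Fintype.ofFinite ι
  let _ := hA.chooseDecomposition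
  let p (i : ι) : V →ₗ[k] A i :=
    DirectSum.component k ι (fun j => A j) i ∘ₗ (DirectSum.decomposeLinearEquiv A).toLinearMap
  have hsum : f = ∑ i, (f ∘ₗ (A i).subtype) ∘ₗ p i := by
    refine LinearMap.ext fun v => ?_
    have hv : ∑ i, (DirectSum.decompose A v i : V) = v :=
      (Finset.sum_subset (Finset.subset_univ _) fun i _ hi => by
        simpa using hi).symm.trans (DirectSum.sum_support_decompose A v)
    simp only [LinearMap.sum_apply, LinearMap.comp_apply, Submodule.subtype_apply, ← map_sum]
    exact congrArg f hv.symm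
  rw [hsum, map_sum] at htr
  obtain ⟨i, -, hi⟩ := Finset.exists_ne_zero_of_sum_ne_zero htr
  rw [LinearMap.trace_comp_comm'] at hi
  have hσi : σ i = i := by
    by_contra hne
    refine hi ?_
    have hzero : p i ∘ₗ f ∘ₗ (A i).subtype = 0 := LinearMap.ext fun v =>
      Subtype.ext (DirectSum.decompose_of_mem_ne A (hf i v v.2) hne)
    rw [hzero, map_zero]
  have hmaps : ∀ v ∈ A i, f v ∈ A i := fun v hv => by simpa only [hσi] using hf i v hv
  refine ⟨i, hmaps, ?_⟩
  have hrestrict : p i ∘ₗ f ∘ₗ (A i).subtype = f.restrict hmaps := LinearMap.ext fun v =>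
    Subtype.ext (DirectSum.decompose_of_mem_same A (hmaps v v.2))
  rwa [hrestrict] at hi

variable {k G V : Type*} [Field k] [Group G] [AddCommGroup V] [Module k V]
  {ρ : Representation k G V} {C : Submodule k V}

variable (ρ) in
lemma trace_restrict_map {g y : G} (hC : ∀ v ∈ C, ρ (y⁻¹ * g * y) v ∈ C)
    (hyC : ∀ v ∈ C.map (ρ y), ρ g v ∈ C.map (ρ y)) :
    LinearMap.trace k C ((ρ (y⁻¹ * g * y)).restrict hC) =
      LinearMap.trace k (C.map (ρ y)) ((ρ g).restrict hyC) := by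
  let e := Submodule.equivMapOfInjective (ρ y) (ρ.apply_bijective y).injective C
  rw [← LinearMap.trace_conj' ((ρ (y⁻¹ * g * y)).restrict hC) e]
  congr 1
  refine LinearMap.ext fun w => Subtype.ext ?_
  obtain ⟨v, rfl⟩ := e.surjective w
  simp [LinearEquiv.conj_apply, e]

lemma iSup_map_eq_top (h : IsMinimalStable ρ ⊤ ⊤) (hC : C ≠ ⊥) : ⨆ y, C.map (ρ y) = ⊤ := by
  refine h.eq_top (fun x _ v hv => ?_) fun h0 => hC ?_
  · have hle : (⨆ y, C.map (ρ y)).map (ρ x) ≤ ⨆ y, C.map (ρ y) := by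
      rw [Submodule.map_iSup]
      exact iSup_le fun y => map_mul_eq_map_map (ρ := ρ) x y C ▸ le_iSup (fun y => C.map (ρ y)) _
    exact hle ⟨v, hv, rfl⟩
  · exact le_bot_iff.1 (h0 ▸ le_iSup_of_le 1 (by rw [map_one]; exact (Submodule.map_id C).ge))

variable (ρ C) in
/-- The setwise stabilizer of a subspace. -/
def submoduleStabilizer : Subgroup G :=
  letI := submoduleAction ρ
  MulAction.stabilizer G C

lemma mem_submoduleStabilizer {y : G} : y ∈ submoduleStabilizer ρ C ↔ C.map (ρ y) = C := Iff.rfl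

lemma isStable_submoduleStabilizer : IsStable ρ (submoduleStabilizer ρ C) C :=
  fun _ hx v hv => (mem_submoduleStabilizer.1 hx).le ⟨v, hv, rfl⟩

variable (ρ C) in
/-- The orbit of a subspace under `G`. It is a system of imprimitivity when it is independent. -/
def translates : Set (Submodule k V) := Set.range fun y : G => C.map (ρ y)

variable (ρ C) in
lemma index_submoduleStabilizer :
    (submoduleStabilizer ρ C).index = Nat.card (translates ρ C) :=
  letI := submoduleAction ρ
  (MulAction.index_stabilizer G C).trans (Nat.card_coe_set_eq _).symm

lemma isMinimalStable_submoduleStabilizer (h : IsMinimalStable ρ ⊤ ⊤) (hC : C ≠ ⊥)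
    (hind : sSupIndep (translates ρ C)) :
    IsMinimalStable ρ (submoduleStabilizer ρ C) C := by
  refine ⟨hC, isStable_submoduleStabilizer, fun U hUC hU hne => ?_⟩
  have hCmem : C ∈ translates ρ C := ⟨1, (congrArg C.map (map_one ρ)).trans C.map_id⟩
  set D := sSup (translates ρ C \ {C})
  have htop : U ⊔ D = ⊤ := by
    rw [eq_top_iff, ← iSup_map_eq_top h hne]
    refine iSup_le fun y => ?_
    by_cases hy : y ∈ submoduleStabilizer ρ C
    · exact (hU.map_eq hy).le.trans le_sup_left
    · refine (Submodule.map_mono hUC).trans (le_sup_of_le_right (le_sSup ⟨⟨y, rfl⟩, ?_⟩))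
      exact fun hyC => hy (mem_submoduleStabilizer.2 hyC)
  calc U = U ⊔ D ⊓ C := by rw [inf_comm, (hind hCmem).eq_bot, sup_bot_eq]
    _ = (U ⊔ D) ⊓ C := (sup_inf_assoc_of_le D hUC).symm
    _ = C := by rw [htop, top_inf_eq]

lemma isInternal_translates [DecidableEq (translates ρ C)] (h : IsMinimalStable ρ ⊤ ⊤)
    (hC : C ≠ ⊥) (hind : sSupIndep (translates ρ C)) :
    DirectSum.IsInternal fun A : translates ρ C => (A : Submodule k V) := by
  refine DirectSum.isInternal_submodule_of_iSupIndep_of_iSup_eq_top ((sSupIndep_iff _).1 hind) ?_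
  rw [eq_top_iff, ← iSup_map_eq_top h hC]
  exact iSup_le fun y => le_iSup (fun A : translates ρ C => (A : Submodule k V)) ⟨_, y, rfl⟩

variable [FiniteDimensional k V]

lemma finrank_eq_index_mul_finrank (h : IsMinimalStable ρ ⊤ ⊤) (hC : C ≠ ⊥)
    (hind : sSupIndep (translates ρ C)) :
    finrank k V = (submoduleStabilizer ρ C).index * finrank k C := by
  classical
  have : Finite (translates ρ C) := WellFoundedGT.finite_of_sSupIndep hind
  have := Fintype.ofFinite (translates ρ C)
  have hfin (A : translates ρ C) : finrank k (A : Submodule k V) = finrank k C := by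
    obtain ⟨_, y, rfl⟩ := A
    exact finrank_map_apply y C
  have hint := isInternal_translates h hC hind
  rw [← (LinearEquiv.ofBijective (DirectSum.coeLinearMap _) hint).finrank_eq,
    Module.finrank_directSum, Finset.sum_congr rfl fun A _ => hfin A, Finset.sum_const,
    Finset.card_univ, smul_eq_mul, index_submoduleStabilizer, Nat.card_eq_fintype_card]

lemma exists_conj_trace_restrict_ne_zero (h : IsMinimalStable ρ ⊤ ⊤) (hC : C ≠ ⊥)
    (hind : sSupIndep (translates ρ C)) {g : G} (htr : LinearMap.trace k V (ρ g) ≠ 0) :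
    ∃ y, ∃ hy : y⁻¹ * g * y ∈ submoduleStabilizer ρ C,
      LinearMap.trace k C ((ρ (y⁻¹ * g * y)).restrict (isStable_submoduleStabilizer _ hy)) ≠ 0 := by
  classical
  have : Finite (translates ρ C) := WellFoundedGT.finite_of_sSupIndep hind
  let σ (A : translates ρ C) : translates ρ C := ⟨(A : Submodule k V).map (ρ g), by
    obtain ⟨_, y, rfl⟩ := A
    exact ⟨g * y, map_mul_eq_map_map g y C⟩⟩
  obtain ⟨⟨_, y, rfl⟩, hmaps, hne⟩ := exists_trace_restrict_ne_zero_of_isInternal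
    (isInternal_translates h hC hind) (σ := σ) (fun _ v hv => ⟨v, hv, rfl⟩) htr
  have hgy : (C.map (ρ y)).map (ρ g) = C.map (ρ y) :=
    Submodule.eq_of_le_of_finrank_eq (Submodule.map_le_iff_le_comap.2 hmaps)
      (finrank_map_apply g _)
  have hy : y⁻¹ * g * y ∈ submoduleStabilizer ρ C := by
    rw [mem_submoduleStabilizer, map_mul_eq_map_map, map_mul_eq_map_map, hgy, map_inv_map]
  exact ⟨y, hy, by rwa [trace_restrict_map ρ _ hmaps]⟩

end ImprimitivitySystems

section IsotypicSubspaces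

variable {k G V : Type*} [Field k] [Group G] [AddCommGroup V] [Module k V]
  {ρ : Representation k G V} {N : Subgroup G} {W : Submodule k V}

/-- The space `Hom_N(W, V)` of `N`-equivariant maps from an `N`-stable subspace `W` to `V`. -/
def equivariantMaps (hW : IsStable ρ N W) : Submodule k (W →ₗ[k] V) where
  carrier := {f | ∀ (x : N) (w : W), f (hW.representation x w) = ρ x (f w)}
  add_mem' hf hf' x w := by simp [hf x w, hf' x w]
  zero_mem' x w := by simp
  smul_mem' c f hf x w := by simp [hf x w]

/-- The evaluation map `W ⊗ Hom_N(W, V) → V`. -/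
noncomputable def evaluation (hW : IsStable ρ N W) : W ⊗[k] equivariantMaps hW →ₗ[k] V :=
  TensorProduct.lift (equivariantMaps hW).subtype.flip

@[simp] lemma evaluation_tmul (hW : IsStable ρ N W) (w : W) (f : equivariantMaps hW) :
    evaluation hW (w ⊗ₜ f) = (f : W →ₗ[k] V) w := rfl

/-- The `W`-isotypic subspace of `V`, as the image of the evaluation map. -/
noncomputable def isotypicSubspace (hW : IsStable ρ N W) : Submodule k V :=
  LinearMap.range (evaluation hW)

lemma isotypicSubspace_le {hW : IsStable ρ N W} {U : Submodule k V}
    (h : ∀ f ∈ equivariantMaps hW, ∀ w, f w ∈ U) : isotypicSubspace hW ≤ U := by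
  rintro _ ⟨z, rfl⟩
  induction z with
  | zero => simp
  | tmul w f => exact h f f.2 w
  | add a b ha hb => exact map_add (evaluation hW) a b ▸ U.add_mem ha hb

lemma apply_mem_isotypicSubspace {hW : IsStable ρ N W} {f : W →ₗ[k] V}
    (hf : f ∈ equivariantMaps hW) (w : W) : f w ∈ isotypicSubspace hW :=
  ⟨w ⊗ₜ ⟨f, hf⟩, rfl⟩

lemma le_isotypicSubspace (hW : IsStable ρ N W) : W ≤ isotypicSubspace hW := fun w hw =>
  apply_mem_isotypicSubspace (hW := hW) (f := W.subtype) (fun _ _ => rfl) ⟨w, hw⟩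

lemma isStable_isotypicSubspace (hW : IsStable ρ N W) : IsStable ρ N (isotypicSubspace hW) := by
  intro x hx
  refine isotypicSubspace_le (U := (isotypicSubspace hW).comap (ρ x)) fun f hf w => ?_
  rw [Submodule.mem_comap, ← hf ⟨x, hx⟩ w]
  exact apply_mem_isotypicSubspace hf _

/-- An `N`-equivariant map, viewed as a linear map over the enveloping algebra. -/
def equivariantToEnvelope (hW : IsStable ρ N W) (f : equivariantMaps hW) :
    hW.toEnvelope →ₗ[envelope ρ N] V where
  toFun := f.1
  map_add' := f.1.map_add
  map_smul' := by
    rintro ⟨a, ha⟩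
    induction ha using Algebra.adjoin_induction with
    | mem a ha =>
      obtain ⟨x, hx, rfl⟩ := ha
      exact f.2 ⟨x, hx⟩
    | algebraMap c => exact f.1.map_smul c
    | add a b ha hb iha ihb =>
      intro w
      exact (f.1.map_add ⟨a w, hW.envelope_apply_mem ha w.2⟩
        ⟨b w, hW.envelope_apply_mem hb w.2⟩).trans (congrArg₂ (· + ·) (iha w) (ihb w))
    | mul a b ha hb iha ihb =>
      intro w
      exact (iha ⟨b w, hW.envelope_apply_mem hb w.2⟩).trans (congrArg a (ihb w))

lemma IsMinimalStable.isotypicSubspace_eq (h : IsMinimalStable ρ N W) :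
    isotypicSubspace h.isStable =
      (isotypicComponent (envelope ρ N) V h.isStable.toEnvelope).restrictScalars k := by
  have := h.isSimpleModule
  refine le_antisymm (isotypicSubspace_le fun f hf w => ?_) ?_
  · have hle := LinearMap.le_comap_isotypicComponent (R := envelope ρ N)
      (M := h.isStable.toEnvelope) (N := V) h.isStable.toEnvelope
      (equivariantToEnvelope h.isStable ⟨f, hf⟩)
    have htop : isotypicComponent (envelope ρ N) h.isStable.toEnvelope h.isStable.toEnvelope = ⊤ :=
      top_le_iff.1 (le_sSup ⟨Submodule.topEquiv⟩)
    exact @hle w (htop.ge Submodule.mem_top)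
  · suffices hle : isotypicComponent (envelope ρ N) V h.isStable.toEnvelope ≤
        (isStable_isotypicSubspace h.isStable).toEnvelope from hle
    refine sSup_le fun m ⟨e⟩ v hv => ?_
    let f : W →ₗ[k] V := (m.subtype ∘ₗ e.symm.toLinearMap).restrictScalars k
    have hf : f ∈ equivariantMaps h.isStable := fun x w =>
      (m.subtype ∘ₗ e.symm.toLinearMap).map_smul ⟨ρ x, apply_mem_envelope x.2⟩ w
    have hfv : f (e ⟨v, hv⟩) = v := congrArg Subtype.val (e.symm_apply_apply ⟨v, hv⟩)
    exact hfv ▸ apply_mem_isotypicSubspace hf _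

variable [N.Normal]

lemma map_isotypicSubspace_le (hW : IsStable ρ N W) (y : G) :
    (isotypicSubspace hW).map (ρ y) ≤ isotypicSubspace (hW.map_of_normal y) := by
  refine Submodule.map_le_iff_le_comap.2 (isotypicSubspace_le fun f hf w => ?_)
  let e := Submodule.equivMapOfInjective (ρ y) (ρ.apply_bijective y).injective W
  have hf' : ρ y ∘ₗ f ∘ₗ e.symm.toLinearMap ∈ equivariantMaps (hW.map_of_normal y) := by
    intro x v
    obtain ⟨u, rfl⟩ := e.surjective v
    have hxu : (hW.map_of_normal y).representation x (e u) =
        e (hW.representation (MulAut.conjNormal y⁻¹ x) u) :=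
      Subtype.ext (by simp [e])
    have hfu : f (hW.representation (MulAut.conjNormal y⁻¹ x) u) = ρ (y⁻¹ * x * y) (f u) := by
      simpa using hf (MulAut.conjNormal y⁻¹ x) u
    simp only [hxu, LinearMap.comp_apply, LinearEquiv.coe_coe, LinearEquiv.symm_apply_apply, hfu,
      map_mul, Module.End.mul_apply, ρ.self_inv_apply]
  simpa [e] using apply_mem_isotypicSubspace hf' (e w)

lemma map_isotypicSubspace (hW : IsStable ρ N W) (y : G) :
    (isotypicSubspace hW).map (ρ y) = isotypicSubspace (hW.map_of_normal y) := by
  refine le_antisymm (map_isotypicSubspace_le hW y) ?_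
  have hle := Submodule.map_mono (f := ρ y) (map_isotypicSubspace_le (hW.map_of_normal y) y⁻¹)
  have hcancel := map_inv_map (ρ := ρ) y⁻¹ (isotypicSubspace (hW.map_of_normal y))
  rw [inv_inv] at hcancel
  simpa only [hcancel, map_inv_map] using hle

lemma IsMinimalStable.sSupIndep_translates_isotypicSubspace (h : IsMinimalStable ρ N W) :
    sSupIndep (translates ρ (isotypicSubspace h.isStable)) := by
  have hcomp : ∀ A ∈ translates ρ (isotypicSubspace h.isStable),
      ∃ B ∈ isotypicComponents (envelope ρ N) V, A = B.restrictScalars k := by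
    rintro _ ⟨y, rfl⟩
    refine ⟨_, ⟨_, (h.map_of_normal y).isSimpleModule, rfl⟩, ?_⟩
    rw [← (h.map_of_normal y).isotypicSubspace_eq, ← map_isotypicSubspace]
  intro A hA
  obtain ⟨B, hB, rfl⟩ := hcomp A hA
  have hle : sSup (translates ρ (isotypicSubspace h.isStable) \ {B.restrictScalars k}) ≤
      (sSup (isotypicComponents (envelope ρ N) V \ {B})).restrictScalars k := by
    refine sSup_le fun D hD => ?_
    obtain ⟨D', hD', rfl⟩ := hcomp D hD.1
    exact le_sSup (a := D') ⟨hD', fun hDB => hD.2 (congrArg (Submodule.restrictScalars k) hDB)⟩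
  have hdisj := Submodule.disjoint_def.1 (sSupIndep_isotypicComponents _ _ hB)
  exact Submodule.disjoint_def.2 fun v hv hv' => hdisj v hv (hle hv')

end IsotypicSubspaces

section Evaluation

variable {k G V : Type*} [Field k] [IsAlgClosed k] [Group G] [AddCommGroup V] [Module k V]
  [FiniteDimensional k V] {ρ : Representation k G V} {N : Subgroup G} {W : Submodule k V}

lemma IsMinimalStable.evaluation_rTensor_eq_zero (h : IsMinimalStable ρ N W)
    {z : W ⊗[k] equivariantMaps h.isStable} (hz : evaluation h.isStable z = 0) (T : W →ₗ[k] W) :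
    evaluation h.isStable (T.rTensor _ z) = 0 := by
  let E : (W →ₗ[k] W) →ₗ[k] V :=
    evaluation h.isStable ∘ₗ LinearMap.applyₗ z ∘ₗ LinearMap.rTensorHom _
  suffices htop : LinearMap.ker E = ⊤ from htop.ge (Submodule.mem_top (x := T))
  rw [eq_top_iff, ← h.isMinimalStable_representation.span_image_eq_top, Submodule.span_le]
  rintro _ ⟨x, -, rfl⟩
  have hcomm : evaluation h.isStable ∘ₗ (h.isStable.representation x).rTensor _ =
      ρ x ∘ₗ evaluation h.isStable :=
    TensorProduct.ext' fun w f => f.2 x w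
  have hx := LinearMap.congr_fun hcomm z
  rwa [LinearMap.comp_apply, LinearMap.comp_apply, hz, map_zero] at hx

lemma IsMinimalStable.evaluation_injective (h : IsMinimalStable ρ N W) :
    Function.Injective (evaluation h.isStable) := by
  refine (injective_iff_map_eq_zero _).2 fun z hz => ?_
  have hslice (φ : W →ₗ[k] k) : TensorProduct.lid k _ (φ.rTensor _ z) = 0 := by
    refine Subtype.ext (LinearMap.ext fun w => ?_)
    have hcomm : evaluation h.isStable ∘ₗ (φ.smulRight w).rTensor _ =
        LinearMap.applyₗ w ∘ₗ (equivariantMaps h.isStable).subtype ∘ₗ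
          (TensorProduct.lid k _).toLinearMap ∘ₗ φ.rTensor _ :=
      TensorProduct.ext' fun u f => by simp
    exact (LinearMap.congr_fun hcomm z).symm.trans (h.evaluation_rTensor_eq_zero hz _)
  let b := Module.finBasis k W
  refine (TensorProduct.equivFinsuppOfBasisLeft b).injective (Finsupp.ext fun i => ?_)
  rw [TensorProduct.equivFinsuppOfBasisLeft_apply, hslice, map_zero, Finsupp.zero_apply]

lemma IsMinimalStable.finrank_isotypicSubspace (h : IsMinimalStable ρ N W) :
    finrank k (isotypicSubspace h.isStable) =
      finrank k W * finrank k (equivariantMaps h.isStable) := by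
  rw [← finrank_tensorProduct]
  exact (LinearEquiv.ofInjective _ h.evaluation_injective).finrank_eq.symm

end Evaluation

section TwistedPairs

variable {k G V : Type*} [Field k] [Group G] [AddCommGroup V] [Module k V] {N : Subgroup G}
  [N.Normal]

/-- The pairs `(y, t)` for which `t` intertwines the representation `θ` of `N` with its conjugate
by `y`. This group carries honest representations where the inertia group of `θ` only has
projective ones. -/
def twistedPairs {W : Type*} [AddCommGroup W] [Module k W] (θ : Representation k N W) :
    Subgroup (G × (W ≃ₗ[k] W)) where
  carrier := {p | ∀ (x : N) (w : W), p.2 (θ x w) = θ (MulAut.conjNormal p.1 x) (p.2 w)}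
  one_mem' x w := by simp
  mul_mem' {p q} hp hq x w := by simp [hp _ _, hq _ _]
  inv_mem' {p} hp x w := by
    obtain ⟨u, rfl⟩ := p.2.surjective w
    refine p.2.injective ?_
    have hpx := hp (MulAut.conjNormal p.1⁻¹ x) u
    rw [map_inv, MulAut.apply_inv_self] at hpx
    simp [← hpx]

variable {ρ : Representation k G V} {W : Submodule k V}

/-- The action of `twistedPairs` on the multiplicity space `Hom_N(W, V)`. -/
def multiplicityRepresentation (hW : IsStable ρ N W) :
    Representation k (twistedPairs hW.representation) (equivariantMaps hW) where
  toFun p :=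
    { toFun := fun f => ⟨ρ p.1.1 ∘ₗ f.1 ∘ₗ (p.1.2⁻¹ : W ≃ₗ[k] W).toLinearMap, fun x w => by
        have hpx := (inv_mem p.2 : p.1⁻¹ ∈ twistedPairs hW.representation) x w
        have hfx := f.2 (MulAut.conjNormal p.1.1⁻¹ x) (p.1.2⁻¹ w)
        simp only [Prod.snd_inv, Prod.fst_inv] at hpx
        rw [MulAut.conjNormal_apply] at hfx
        simp only [LinearMap.comp_apply, LinearEquiv.coe_coe, hpx, hfx]
        simp only [map_mul, Module.End.mul_apply, ρ.self_inv_apply, inv_inv]⟩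
      map_add' := fun f f' => by ext w; simp
      map_smul' := fun c f => by ext w; simp }
  map_one' := by ext f w; simp
  map_mul' p q := by ext f w; simp

lemma coe_multiplicityRepresentation_apply (hW : IsStable ρ N W)
    (p : twistedPairs hW.representation) (f : equivariantMaps hW) (w : W) :
    (multiplicityRepresentation hW p f : W →ₗ[k] V) w = ρ p.1.1 (f.1 (p.1.2⁻¹ w)) := rfl

lemma evaluation_comp_map_multiplicityRepresentation (hW : IsStable ρ N W)
    (p : twistedPairs hW.representation) :
    evaluation hW ∘ₗ TensorProduct.map p.1.2.toLinearMap (multiplicityRepresentation hW p) =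
      ρ p.1.1 ∘ₗ evaluation hW := by
  refine TensorProduct.ext' fun w f => ?_
  have hw : p.1.2⁻¹ (p.1.2 w) = w := p.1.2.symm_apply_apply w
  simp [coe_multiplicityRepresentation_apply, hw]

lemma IsMinimalStable.exists_mem_twistedPairs (h : IsMinimalStable ρ N W) {y : G}
    (hy : y ∈ submoduleStabilizer ρ (isotypicSubspace h.isStable)) :
    ∃ t, (y, t) ∈ twistedPairs h.isStable.representation := by
  have := h.isSimpleModule
  have hy' := h.map_of_normal y
  have := hy'.isSimpleModule
  have hle : hy'.isStable.toEnvelope ≤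
      isotypicComponent (envelope ρ N) V h.isStable.toEnvelope := by
    have hWy : W.map (ρ y) ≤ isotypicSubspace h.isStable :=
      (Submodule.map_mono (le_isotypicSubspace h.isStable)).trans_eq hy
    rwa [h.isotypicSubspace_eq] at hWy
  obtain ⟨e⟩ := isIsotypicOfType_submodule_iff.1
    (IsIsotypicOfType.isotypicComponent (envelope ρ N) V h.isStable.toEnvelope) _ hle
  let e₁ : W ≃ₗ[k] W.map (ρ y) :=
    Submodule.equivMapOfInjective (ρ y) (ρ.apply_bijective y).injective W
  let e₂ : W.map (ρ y) ≃ₗ[k] W := e.restrictScalars k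
  refine ⟨e₁.trans e₂, fun x w => ?_⟩
  have he₁ : e₁ (h.isStable.representation x w) =
      hy'.isStable.representation (MulAut.conjNormal y x) (e₁ w) :=
    Subtype.ext (by simp [e₁])
  have he₂ (x : N) (v : W.map (ρ y)) :
      e₂ (hy'.isStable.representation x v) = h.isStable.representation x (e₂ v) :=
    e.map_smul ⟨ρ x, apply_mem_envelope x.2⟩ v
  exact (congrArg e₂ he₁).trans (he₂ _ _)

lemma IsMinimalStable.map_fst_twistedPairs (h : IsMinimalStable ρ N W) :
    (twistedPairs h.isStable.representation).map (MonoidHom.fst _ _) =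
      submoduleStabilizer ρ (isotypicSubspace h.isStable) := by
  refine le_antisymm (fun y hy => IsStable.map_eq ?_ hy) fun y hy => ?_
  · rintro _ ⟨p, hp, rfl⟩ _ ⟨z, rfl⟩
    exact ⟨_, LinearMap.congr_fun
      (evaluation_comp_map_multiplicityRepresentation h.isStable ⟨p, hp⟩) z⟩
  · obtain ⟨t, ht⟩ := h.exists_mem_twistedPairs hy
    exact ⟨(y, t), ht, rfl⟩

variable [IsAlgClosed k] [FiniteDimensional k V]

lemma IsMinimalStable.trace_restrict_isotypicSubspace (h : IsMinimalStable ρ N W)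
    (p : twistedPairs h.isStable.representation)
    (hp : ∀ v ∈ isotypicSubspace h.isStable, ρ p.1.1 v ∈ isotypicSubspace h.isStable) :
    LinearMap.trace k (isotypicSubspace h.isStable) ((ρ p.1.1).restrict hp) =
      LinearMap.trace k W p.1.2.toLinearMap *
        LinearMap.trace k _ (multiplicityRepresentation h.isStable p) := by
  let e : W ⊗[k] equivariantMaps h.isStable ≃ₗ[k] isotypicSubspace h.isStable :=
    LinearEquiv.ofInjective _ h.evaluation_injective
  rw [← LinearMap.trace_tensorProduct', ← LinearMap.trace_conj' _ e]
  congr 1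
  refine LinearMap.ext fun v => ?_
  obtain ⟨z, rfl⟩ := e.surjective v
  rw [LinearEquiv.conj_apply_apply, LinearEquiv.symm_apply_apply]
  exact Subtype.ext (LinearMap.congr_fun
    (evaluation_comp_map_multiplicityRepresentation h.isStable p) z).symm

lemma IsMinimalStable.isMinimalStable_multiplicityRepresentation (h : IsMinimalStable ρ N W)
    (hI : IsMinimalStable ρ (submoduleStabilizer ρ (isotypicSubspace h.isStable))
      (isotypicSubspace h.isStable)) :
    IsMinimalStable (multiplicityRepresentation h.isStable) ⊤ ⊤ where
  ne_bot h0 := by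
    have hpos := hI.finrank_pos
    rw [h.finrank_isotypicSubspace, ← finrank_top k (equivariantMaps _), h0, finrank_bot,
      mul_zero] at hpos
    exact hpos.false
  isStable := isStable_top
  eq_of_le U _ hU hne := by
    let ψ : W ⊗[k] U →ₗ[k] V := evaluation h.isStable ∘ₗ U.subtype.lTensor W
    have hstable : IsStable ρ (submoduleStabilizer ρ (isotypicSubspace h.isStable))
        (LinearMap.range ψ) := by
      rintro y hy _ ⟨z, rfl⟩
      obtain ⟨t, ht⟩ := h.exists_mem_twistedPairs hy
      let p : twistedPairs h.isStable.representation := ⟨(y, t), ht⟩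
      have hψ : ψ ∘ₗ TensorProduct.map t.toLinearMap
          ((multiplicityRepresentation h.isStable p).restrict (hU p trivial)) = ρ y ∘ₗ ψ :=
        TensorProduct.ext' fun w f => LinearMap.congr_fun
          (evaluation_comp_map_multiplicityRepresentation h.isStable p) (w ⊗ₜ f)
      exact ⟨_, LinearMap.congr_fun hψ z⟩
    have hne' : LinearMap.range ψ ≠ ⊥ := by
      obtain ⟨f, hf, hf0⟩ := U.exists_mem_ne_zero_of_ne_bot hne
      refine fun hψ => hf0 (Subtype.ext (LinearMap.ext fun w => ?_))
      exact LinearMap.congr_fun (LinearMap.range_eq_bot.1 hψ) (w ⊗ₜ ⟨f, hf⟩)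
    have hrange := hI.eq_of_le _ (LinearMap.range_comp_le_range _ _) hstable hne'
    have hdim : finrank k W * finrank k (equivariantMaps h.isStable) ≤
        finrank k W * finrank k U := by
      have : Module.Free k U := .of_divisionRing k U
      rw [← h.finrank_isotypicSubspace, ← hrange, ← finrank_tensorProduct]
      exact LinearMap.finrank_range_le ψ
    exact Submodule.eq_top_of_finrank_eq
      (le_antisymm (Submodule.finrank_le U) (Nat.le_of_mul_le_mul_left hdim h.finrank_pos))

lemma IsMinimalStable.actsByScalars_multiplicityRepresentation (h : IsMinimalStable ρ N W) :
    ActsByScalars (multiplicityRepresentation h.isStable)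
      (N.comap ((MonoidHom.fst _ _).comp (twistedPairs h.isStable.representation).subtype)) := by
  rintro ⟨⟨y, t⟩, hp⟩ (hy : y ∈ N)
  set θ := h.isStable.representation
  have hinv (x : N) (w : W) : t⁻¹ (θ x w) = θ (MulAut.conjNormal y⁻¹ x) (t⁻¹ w) := inv_mem hp x w
  obtain ⟨c, hc⟩ := h.isMinimalStable_representation.exists_eq_smul_one
    ((t⁻¹ : W ≃ₗ[k] W).toLinearMap * θ ⟨y, hy⟩) fun x _ => by
      refine LinearMap.ext fun w => ?_
      have hyx : MulAut.conjNormal y⁻¹ (⟨y, hy⟩ * x * ⟨y, hy⟩⁻¹ : N) = x :=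
        Subtype.ext (by simp [mul_assoc])
      have hx := hinv (⟨y, hy⟩ * x * ⟨y, hy⟩⁻¹) (θ ⟨y, hy⟩ w)
      rwa [hyx, ← Module.End.mul_apply, ← map_mul, inv_mul_cancel_right, map_mul] at hx
  refine ⟨c, LinearMap.ext fun f => Subtype.ext (LinearMap.ext fun w => ?_)⟩
  have hyy : MulAut.conjNormal y⁻¹ (⟨y, hy⟩ : N) = ⟨y, hy⟩ := Subtype.ext (by simp)
  calc ρ y (f.1 (t⁻¹ w)) = f.1 (θ ⟨y, hy⟩ (t⁻¹ w)) := (f.2 ⟨y, hy⟩ _).symm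
    _ = f.1 (t⁻¹ (θ ⟨y, hy⟩ w)) := by rw [hinv, hyy]
    _ = f.1 (c • w) := congrArg f.1 (LinearMap.congr_fun hc w)
    _ = c • f.1 w := f.1.map_smul c w

end TwistedPairs

section CliffordReduction

lemma orderOf_mk_comap {G G' : Type*} [Group G] [Group G'] (φ : G' →* G) (N : Subgroup G)
    [N.Normal] (g : G') :
    orderOf (QuotientGroup.mk g : G' ⧸ N.comap φ) = orderOf (QuotientGroup.mk (φ g) : G ⧸ N) :=
  orderOf_eq_orderOf_iff.2 fun j => by
    rw [← QuotientGroup.mk_pow, ← QuotientGroup.mk_pow, QuotientGroup.eq_one_iff,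
      QuotientGroup.eq_one_iff, Subgroup.mem_comap, map_pow]

lemma orderOf_mk_conj {G : Type*} [Group G] (N : Subgroup G) [N.Normal] (g y : G) :
    orderOf (QuotientGroup.mk (y⁻¹ * g * y) : G ⧸ N) = orderOf (QuotientGroup.mk g : G ⧸ N) := by
  refine SemiconjBy.orderOf_eq (y : G ⧸ N) ?_
  rw [SemiconjBy, ← QuotientGroup.mk_mul, ← QuotientGroup.mk_mul, mul_assoc, mul_inv_cancel_left]

/-- The divisibility `o(gN) χ(1) ∣ |G : N|` for all normal subgroups `N` of index `n` acting by
scalars in an irreducible complex representation with character `χ` and all `g` with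
`χ(g) ≠ 0`. -/
def ScalarDivisibility (n : ℕ) : Prop :=
  ∀ (G V : Type) [Group G] [AddCommGroup V] [Module ℂ V] [FiniteDimensional ℂ V]
    (ρ : Representation ℂ G V) (N : Subgroup G) [N.Normal] [N.FiniteIndex], N.index = n →
    IsMinimalStable ρ ⊤ ⊤ → ActsByScalars ρ N →
    ∀ g : G, LinearMap.trace ℂ V (ρ g) ≠ 0 →
      orderOf (QuotientGroup.mk g : G ⧸ N) * finrank ℂ V ∣ n

/-- The divisibility `o(gN) χ(1) ∣ |G : N| θ(1)` for all normal subgroups `N` of index `n` and all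
irreducible characters `χ` of `G` lying over `θ` with `χ(g) ≠ 0`; here `θ` is afforded by a
subspace of the representation affording `χ`. -/
def RelativeDivisibility (n : ℕ) : Prop :=
  ∀ (G V : Type) [Group G] [AddCommGroup V] [Module ℂ V] [FiniteDimensional ℂ V]
    (ρ : Representation ℂ G V) (N : Subgroup G) [N.Normal] [N.FiniteIndex], N.index = n →
    IsMinimalStable ρ ⊤ ⊤ → ∀ W, IsMinimalStable ρ N W →
    ∀ g : G, LinearMap.trace ℂ V (ρ g) ≠ 0 →
      orderOf (QuotientGroup.mk g : G ⧸ N) * finrank ℂ V ∣ n * finrank ℂ W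

theorem RelativeDivisibility.of_scalarDivisibility {n : ℕ}
    (h : ∀ m, m ∣ n → ScalarDivisibility m) : RelativeDivisibility n := by
  rintro G V _ _ _ _ ρ N _ _ rfl hV W hW g hg
  set C := isotypicSubspace hW.isStable
  set H := submoduleStabilizer ρ C
  let π := (MonoidHom.fst G (W ≃ₗ[ℂ] W)).comp (twistedPairs hW.isStable.representation).subtype
  have hC0 : C ≠ ⊥ := ne_bot_of_le_ne_bot hW.ne_bot (le_isotypicSubspace hW.isStable)
  have hind := hW.sSupIndep_translates_isotypicSubspace
  obtain ⟨y, hy, htr⟩ := exists_conj_trace_restrict_ne_zero hV hC0 hind hg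
  have hNH : N ≤ H := fun x hx => (isStable_isotypicSubspace hW.isStable).map_eq hx
  have hindex : (N.comap π).index = N.relIndex H := by
    rw [Subgroup.index_comap, MonoidHom.range_comp, Subgroup.range_subtype,
      hW.map_fst_twistedPairs]
  have : (N.comap π).FiniteIndex := ⟨hindex ▸ Subgroup.FiniteIndex.index_ne_zero⟩
  obtain ⟨t, ht⟩ := hW.exists_mem_twistedPairs hy
  let p : twistedPairs hW.isStable.representation := ⟨(_, t), ht⟩
  have hp : LinearMap.trace ℂ _ (multiplicityRepresentation hW.isStable p) ≠ 0 := fun h0 =>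
    htr ((hW.trace_restrict_isotypicSubspace p _).trans (by rw [h0, mul_zero]))
  have hdvd := h (N.relIndex H) ⟨H.index, (Subgroup.relIndex_mul_index hNH).symm⟩ _ _
    (multiplicityRepresentation hW.isStable) (N.comap π) hindex
    (hW.isMinimalStable_multiplicityRepresentation
      (isMinimalStable_submoduleStabilizer hV hC0 hind))
    hW.actsByScalars_multiplicityRepresentation p hp
  rw [orderOf_mk_comap, show π p = y⁻¹ * g * y from rfl, orderOf_mk_conj] at hdvd
  rw [finrank_eq_index_mul_finrank hV hC0 hind, hW.finrank_isotypicSubspace,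
    ← Subgroup.relIndex_mul_index hNH]
  obtain ⟨c, hc⟩ := hdvd
  rw [hc]
  exact ⟨c, by ring⟩

end CliffordReduction

/-! ### Normal subgroups with cyclic quotient -/

section Constituents

universe u

lemma trace_eq_trace_restrict_add_trace_mapQ {k V : Type*} [Field k] [AddCommGroup V] [Module k V]
    [FiniteDimensional k V] (f : V →ₗ[k] V) (B : Submodule k V) (h : B ≤ B.comap f) :
    LinearMap.trace k V f =
      LinearMap.trace k B (f.restrict h) + LinearMap.trace k (V ⧸ B) (B.mapQ B f h) := by
  obtain ⟨s, hs⟩ := LinearMap.exists_rightInverse_of_surjective B.mkQ (Submodule.range_mkQ B)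
  have hmk_s (x : V ⧸ B) : B.mkQ (s x) = x := LinearMap.congr_fun hs x
  let p : V →ₗ[k] B := LinearMap.codRestrict B (LinearMap.id - s ∘ₗ B.mkQ) fun v => by
    refine (Submodule.Quotient.mk_eq_zero B).1 ((map_sub B.mkQ v (s (B.mkQ v))).trans ?_)
    rw [hmk_s, sub_self]
  have hp (v : V) : (p v : V) = v - s (B.mkQ v) := rfl
  have hsplit : f = (f ∘ₗ B.subtype) ∘ₗ p + (f ∘ₗ s) ∘ₗ B.mkQ := by
    ext v
    simp [hp]
  have hsub : p ∘ₗ f ∘ₗ B.subtype = f.restrict h := by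
    ext v
    have hv : B.mkQ (f v) = 0 := (Submodule.Quotient.mk_eq_zero B).2 (h v.2)
    simp [hp, hv]
  have hquot : B.mkQ ∘ₗ f ∘ₗ s = B.mapQ B f h := by
    refine LinearMap.ext fun x => ?_
    conv_rhs => rw [← hmk_s x]
    rfl
  calc LinearMap.trace k V f
      = LinearMap.trace k V ((f ∘ₗ B.subtype) ∘ₗ p + (f ∘ₗ s) ∘ₗ B.mkQ) := congrArg _ hsplit
    _ = _ := by
      rw [map_add, LinearMap.trace_comp_comm', LinearMap.trace_comp_comm' B.mkQ, hsub, hquot]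

lemma finrank_comap_mkQ {k V : Type*} [Field k] [AddCommGroup V] [Module k V]
    [FiniteDimensional k V] (B : Submodule k V) (U : Submodule k (V ⧸ B)) :
    finrank k (U.comap B.mkQ) = finrank k U + finrank k B := by
  have hB : B ≤ U.comap B.mkQ := (Submodule.ker_mkQ B).ge.trans (LinearMap.ker_le_comap _)
  have hrank := LinearMap.finrank_range_add_finrank_ker (B.mkQ.domRestrict (U.comap B.mkQ))
  rwa [LinearMap.range_domRestrict, Submodule.map_comap_eq_of_surjective B.mkQ_surjective,
    LinearMap.ker_domRestrict, Submodule.ker_mkQ,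
    (Submodule.comapSubtypeEquivOfLe hB).finrank_eq, eq_comm] at hrank

section Field

variable {k G V : Type*} [Field k] [Group G] [AddCommGroup V] [Module k V]
  {ρ : Representation k G V} {S : Subgroup G} {B : Submodule k V}

lemma ActsByScalars.subrepresentation (h : ActsByScalars ρ S) (hB : ∀ g, B ≤ B.comap (ρ g)) :
    ActsByScalars (ρ.subrepresentation B hB) S := fun x hx => by
  obtain ⟨c, hc⟩ := h x hx
  refine ⟨c, LinearMap.ext fun v => Subtype.ext ?_⟩
  exact LinearMap.congr_fun hc v

lemma ActsByScalars.quotient (h : ActsByScalars ρ S) (hB : ∀ g, B ≤ B.comap (ρ g)) :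
    ActsByScalars (ρ.quotient B hB) S := fun x hx => by
  obtain ⟨c, hc⟩ := h x hx
  refine ⟨c, Submodule.linearMap_qext _ (LinearMap.ext fun v => ?_)⟩
  exact congrArg B.mkQ (LinearMap.congr_fun hc v)

lemma isStable_map_subtype (hB : ∀ g, B ≤ B.comap (ρ g)) {U : Submodule k B}
    (hU : IsStable (ρ.subrepresentation B hB) S U) : IsStable ρ S (U.map B.subtype) := by
  rintro x hx _ ⟨v, hv, rfl⟩
  exact ⟨_, hU x hx v hv, rfl⟩

lemma isStable_comap_mkQ (hB : ∀ g, B ≤ B.comap (ρ g)) {U : Submodule k (V ⧸ B)}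
    (hU : IsStable (ρ.quotient B hB) S U) : IsStable ρ S (U.comap B.mkQ) :=
  fun x hx v hv => hU x hx (B.mkQ v) hv

lemma isMinimalStable_top_of_forall [Nontrivial V]
    (h : ∀ U, IsStable ρ S U → U ≠ ⊥ → U = ⊤) : IsMinimalStable ρ S ⊤ :=
  ⟨top_ne_bot, isStable_top, fun U _ => h U⟩

end Field

theorem exists_irreducible_constituent_trace_ne_zero {k G : Type*} [Field k] [Group G]
    {V : Type u} [AddCommGroup V] [Module k V] [FiniteDimensional k V] {ρ : Representation k G V}
    {M N : Subgroup G} {g : G} {d : ℕ} (hN : ActsByScalars ρ N)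
    (hg : LinearMap.trace k V (ρ g) ≠ 0) (hd : ∀ U, IsStable ρ M U → d ∣ finrank k U) :
    ∃ (X : Type u) (_ : AddCommGroup X) (_ : Module k X) (_ : FiniteDimensional k X)
      (τ : Representation k G X), IsMinimalStable τ ⊤ ⊤ ∧ ActsByScalars τ N ∧
        LinearMap.trace k X (τ g) ≠ 0 ∧ d ∣ finrank k X := by
  -- Traces and dimensions add up along a composition series.
  induction hn : finrank k V using Nat.strong_induction_on generalizing V with | _ n ih
  subst hn
  by_cases hirr : ∀ B, IsStable ρ ⊤ B → B ≠ ⊥ → B = ⊤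
  · have : Nontrivial V := not_subsingleton_iff_nontrivial.1 fun _ =>
      hg (by rw [Subsingleton.elim (ρ g) 0, map_zero])
    exact ⟨V, _, _, ‹_›, ρ, isMinimalStable_top_of_forall hirr, hN, hg,
      finrank_top k V ▸ hd ⊤ isStable_top⟩
  push Not at hirr
  obtain ⟨B, hBstable, hB0, hB1⟩ := hirr
  have hB (x : G) : B ≤ B.comap (ρ x) := hBstable x trivial
  have hpos : 0 < finrank k B := Nat.pos_of_ne_zero fun h => hB0 (Submodule.finrank_eq_zero.1 h)
  have hquot := Submodule.finrank_quotient_add_finrank B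
  by_cases hsub : LinearMap.trace k B (ρ.subrepresentation B hB g) = 0
  · refine ih (finrank k (V ⧸ B)) (by omega) (hN.quotient hB) (fun h0 => hg ?_) ?_ rfl
    · rw [trace_eq_trace_restrict_add_trace_mapQ (ρ g) B (hB g)]
      exact (congrArg₂ _ hsub h0).trans (add_zero 0)
    · intro U hU
      have hdvd := hd _ (isStable_comap_mkQ hB hU)
      rw [finrank_comap_mkQ] at hdvd
      exact (Nat.dvd_add_left (hd B fun x _ => hB x)).1 hdvd
  · refine ih (finrank k B) (Submodule.finrank_lt hB1) (hN.subrepresentation hB) hsub ?_ rfl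
    intro U hU
    exact Submodule.finrank_map_subtype_eq B U ▸ hd _ (isStable_map_subtype hB hU)

end Constituents

section NormalSubgroup

variable {k G V : Type*} [Field k] [Group G] [AddCommGroup V] [Module k V]
  {ρ : Representation k G V} {M : Subgroup G} [M.Normal] {W U : Submodule k V}

lemma IsStable.sup {S : Subgroup G} {U' : Submodule k V} (hU : IsStable ρ S U)
    (hU' : IsStable ρ S U') : IsStable ρ S (U ⊔ U') := fun _ hx =>
  Submodule.map_le_iff_le_comap.1 ((Submodule.map_sup _ _ _).trans_le
    (sup_le_sup (hU.map_eq hx).le (hU'.map_eq hx).le))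

lemma IsMinimalStable.disjoint {S : Subgroup G} (hW : IsMinimalStable ρ S W)
    (hU : IsStable ρ S U) (hWU : ¬ W ≤ U) : Disjoint U W := by
  rw [disjoint_iff]
  by_contra hne
  exact hWU (inf_eq_right.1 (hW.eq_of_le (U ⊓ W) inf_le_right
    (fun x hx v hv => ⟨hU x hx v hv.1, hW.isStable x hx v hv.2⟩) hne))

lemma IsMinimalStable.finrank_dvd_finrank_sub [FiniteDimensional k V] (hV : IsMinimalStable ρ ⊤ ⊤)
    (hW : IsMinimalStable ρ M W) (hU : IsStable ρ M U) :
    finrank k W ∣ finrank k V - finrank k U := by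
  induction hc : finrank k V - finrank k U using Nat.strong_induction_on generalizing U with
  | _ c ih
  subst hc
  by_cases htop : U = ⊤
  · rw [htop, finrank_top, Nat.sub_self]
    exact dvd_zero _
  obtain ⟨y, hy⟩ : ∃ y : G, ¬ W.map (ρ y) ≤ U := by
    by_contra! hle
    exact htop (eq_top_iff.2 ((iSup_map_eq_top hV hW.ne_bot).ge.trans (iSup_le hle)))
  have hWy := hW.map_of_normal y
  have hsup := Submodule.finrank_sup_add_finrank_inf_eq U (W.map (ρ y))
  rw [(hWy.disjoint hU hy).eq_bot, finrank_bot, finrank_map_apply] at hsup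
  have hle := Submodule.finrank_le (U ⊔ W.map (ρ y))
  have hpos := hW.finrank_pos
  have hdvd := ih _ (by omega) (hU.sup hWy.isStable) rfl
  have hstep : finrank k V - finrank k U =
      finrank k V - finrank k ↥(U ⊔ W.map (ρ y)) + finrank k W := by omega
  exact hstep ▸ dvd_add hdvd dvd_rfl

lemma IsMinimalStable.finrank_dvd_finrank [FiniteDimensional k V]
    (hV : IsMinimalStable ρ ⊤ ⊤) (hW : IsMinimalStable ρ M W) (hU : IsStable ρ M U) :
    finrank k W ∣ finrank k U := by
  have hbot : finrank k W ∣ finrank k V - finrank k (⊥ : Submodule k V) :=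
    hV.finrank_dvd_finrank_sub hW fun x _ v hv => by simp_all
  rw [finrank_bot, Nat.sub_zero] at hbot
  rw [← Nat.sub_sub_self (Submodule.finrank_le U)]
  exact Nat.dvd_sub hbot (hV.finrank_dvd_finrank_sub hW hU)

end NormalSubgroup

lemma relIndex_sup_zpowers {G : Type*} [Group G] (M : Subgroup G) [M.Normal] (g : G) :
    M.relIndex (M ⊔ Subgroup.zpowers g) = orderOf (QuotientGroup.mk g : G ⧸ M) := by
  have hcard := Subgroup.relIndex_ker (K := Subgroup.zpowers g) (QuotientGroup.mk' M)
  rwa [QuotientGroup.ker_mk', MonoidHom.map_zpowers, Nat.card_zpowers,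
    ← Subgroup.relIndex_sup_left] at hcard

lemma relIndex_lt_index {G : Type*} [Group G] {N H : Subgroup G} [N.FiniteIndex] (hNH : N ≤ H)
    (hH : H ≠ ⊤) : N.relIndex H < N.index := by
  have : H.FiniteIndex := Subgroup.finiteIndex_of_le hNH
  rw [← Subgroup.relIndex_mul_index hNH]
  exact lt_mul_of_one_lt_right (Nat.pos_of_ne_zero Subgroup.FiniteIndex.index_ne_zero)
    (Subgroup.one_lt_index_of_ne_top hH)

section Reduction

variable {G V : Type} [Group G] [AddCommGroup V] [Module ℂ V] [FiniteDimensional ℂ V]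
  {ρ : Representation ℂ G V} {M N : Subgroup G} [M.Normal] [N.Normal] {g : G}

theorem isMinimalStable_of_sup_zpowers_eq_top [M.FiniteIndex] (h : RelativeDivisibility M.index)
    (hV : IsMinimalStable ρ ⊤ ⊤) (hg : LinearMap.trace ℂ V (ρ g) ≠ 0)
    (hMg : M ⊔ Subgroup.zpowers g = ⊤) : IsMinimalStable ρ M ⊤ := by
  obtain ⟨W, -, hW⟩ := exists_isMinimalStable_le ρ M hV.ne_bot isStable_top
  have hdvd := h G V ρ M rfl hV W hW g hg
  rw [← relIndex_sup_zpowers, hMg, Subgroup.relIndex_top_right] at hdvd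
  have hle := Nat.le_of_dvd hW.finrank_pos (Nat.dvd_of_mul_dvd_mul_left
    (Nat.pos_of_ne_zero Subgroup.FiniteIndex.index_ne_zero) hdvd)
  rwa [Submodule.eq_top_of_finrank_eq (le_antisymm (Submodule.finrank_le W) hle)] at hW

theorem orderOf_mul_finrank_dvd_of_sup_zpowers_ne_top [N.FiniteIndex]
    (ih : ∀ m < N.index, ScalarDivisibility m) (h : RelativeDivisibility M.index)
    (hV : IsMinimalStable ρ ⊤ ⊤) (hN : ActsByScalars ρ N) (hg : LinearMap.trace ℂ V (ρ g) ≠ 0)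
    (hNM : N ≤ M) (hMg : M ⊔ Subgroup.zpowers g ≠ ⊤) :
    orderOf (QuotientGroup.mk g : G ⧸ N) * finrank ℂ V ∣ N.index := by
  obtain ⟨W, -, hW⟩ := exists_isMinimalStable_le ρ M hV.ne_bot isStable_top
  set H := M ⊔ Subgroup.zpowers g
  have : M.FiniteIndex := Subgroup.finiteIndex_of_le hNM
  have hMH : M ≤ H := le_sup_left
  have hgH : g ∈ H := (le_sup_right : _ ≤ H) (Subgroup.mem_zpowers g)
  obtain ⟨X, _, _, _, τ, hτ, hτN, hτg, hWX⟩ :=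
    exists_irreducible_constituent_trace_ne_zero (ρ := ρ.comp H.subtype) (M := M.subgroupOf H)
      (N := N.subgroupOf H) (g := ⟨g, hgH⟩) (d := finrank ℂ W) (fun x hx => hN x hx) hg
      fun U hU => hV.finrank_dvd_finrank hW fun x hx => hU ⟨x, hMH hx⟩ hx
  have : (N.comap H.subtype).FiniteIndex := inferInstanceAs (N.subgroupOf H).FiniteIndex
  have hX := ih _ (relIndex_lt_index (hNM.trans hMH) hMg) H X τ (N.comap H.subtype) rfl hτ hτN _
    hτg
  rw [orderOf_mk_comap, ← Subgroup.relIndex_mul_relIndex N M H hNM hMH, relIndex_sup_zpowers] at hX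
  change orderOf (QuotientGroup.mk g : G ⧸ N) * finrank ℂ X ∣ _ at hX
  have hpos : 0 < orderOf (QuotientGroup.mk g : G ⧸ M) * finrank ℂ W :=
    Nat.mul_pos (orderOf_pos _) hW.finrank_pos
  have hprod := mul_dvd_mul ((mul_dvd_mul_left _ hWX).trans hX) (h G V ρ M rfl hV W hW g hg)
  rw [← Subgroup.relIndex_mul_index hNM]
  obtain ⟨c, hc⟩ := hprod
  exact Nat.dvd_of_mul_dvd_mul_left hpos ⟨c, by linear_combination hc⟩

end Reduction

/-! ### Minimal normal subgroups -/

section MinimalNormal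

open Subgroup

variable {Q : Type*} [Group Q] {M K H : Subgroup Q} {g y : Q}

theorem normalizer_le_normalizer_commutator (K : Subgroup Q) :
    normalizer (K : Set Q) ≤ normalizer (⁅K, K⁆ : Subgroup Q) := fun y hy => by
  rw [mem_normalizer_iff_map_conj_eq] at hy ⊢
  rw [map_commutator, hy]

theorem normalizer_le_normalizer_centralizer (K : Subgroup Q) :
    normalizer (K : Set Q) ≤ normalizer (centralizer (K : Set Q) : Set Q) := by
  rw [← normal_subgroupOf_iff_le_normalizer (centralizer_le_normalizer _),
    ← normalizerMonoidHom_ker]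
  infer_instance

/-- `K` is a minimal nontrivial subgroup of `H` among those normalized by `H`. Both are subgroups of
an ambient group, so that `IsMinimalNormalIn M ⊤` says that `M` is a minimal normal subgroup. -/
structure IsMinimalNormalIn (K H : Subgroup Q) : Prop where
  le : K ≤ H
  ne_bot : K ≠ ⊥
  le_normalizer : H ≤ normalizer (K : Set Q)
  eq_of_le : ∀ K' ≤ K, H ≤ normalizer (K' : Set Q) → K' ≠ ⊥ → K' = K

theorem exists_isMinimalNormalIn [Finite Q] (hH : H ≠ ⊥) : ∃ K, IsMinimalNormalIn K H := by
  have hfinite : {K : Subgroup Q | K ≤ H ∧ K ≠ ⊥ ∧ H ≤ normalizer (K : Set Q)}.Finite :=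
    Set.toFinite _
  obtain ⟨K, ⟨hKH, hne, hnorm⟩, hmin⟩ := hfinite.exists_minimal ⟨H, le_rfl, hH, le_normalizer⟩
  exact ⟨K, hKH, hne, hnorm, fun K' hK' hnorm' hne' =>
    hK'.antisymm (hmin ⟨hK'.trans hKH, hne', hnorm'⟩ hK')⟩

namespace IsMinimalNormalIn

theorem normal (h : IsMinimalNormalIn M ⊤) : M.Normal :=
  normalizer_eq_top_iff.1 (top_le_iff.1 h.le_normalizer)

theorem eq_of_normal (h : IsMinimalNormalIn M ⊤) [K.Normal] (hKM : K ≤ M) (hne : K ≠ ⊥) :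
    K = M :=
  h.eq_of_le K hKM le_normalizer_of_normal hne

theorem normalClosure_eq (h : IsMinimalNormalIn M ⊤) (hKM : K ≤ M) (hne : K ≠ ⊥) :
    normalClosure (K : Set Q) = M := by
  have := h.normal
  exact h.eq_of_normal (normalClosure_le_normal hKM)
    (ne_bot_of_le_ne_bot hne (le_normalClosure (H := K)))

theorem commutator_eq_self (h : IsMinimalNormalIn K H) (hne : ⁅K, K⁆ ≠ ⊥) : ⁅K, K⁆ = K :=
  h.eq_of_le _ (commutator_le_self K)
    (h.le_normalizer.trans (normalizer_le_normalizer_commutator K)) hne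

theorem isSimpleGroup (h : IsMinimalNormalIn K K) : IsSimpleGroup K where
  exists_pair_ne := ((nontrivial_iff_ne_bot K).2 h.ne_bot).exists_pair_ne
  eq_bot_or_eq_top_of_normal A hA := by
    have hnorm : K ≤ normalizer (A.map K.subtype : Set Q) := by
      rw [← normal_subgroupOf_iff_le_normalizer (map_subtype_le A), subgroupOf,
        comap_map_eq_self_of_injective K.subtype_injective]
      exact hA
    refine or_iff_not_imp_left.2 fun hne => map_injective K.subtype_injective ?_
    rw [h.eq_of_le _ (map_subtype_le A) hnorm
      (mt (map_eq_bot_iff_of_injective A K.subtype_injective).1 hne), ← MonoidHom.range_eq_map,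
      range_subtype]

theorem centralizer_eq_bot (h : IsMinimalNormalIn M ⊤) (hM : ⁅M, M⁆ ≠ ⊥)
    (hgen : ∀ C : Subgroup Q, C.Normal → C ≠ ⊥ → C ⊔ zpowers g = ⊤) :
    centralizer (M : Set Q) = ⊥ := by
  have := h.normal
  by_contra hne
  have hcomm : _root_.commutator Q ≤ centralizer (M : Set Q) :=
    Normal.commutator_le_of_self_sup_commutative_eq_top (hgen _ inferInstance hne) inferInstance
  refine hM (commutator_eq_bot_iff_le_centralizer.2 ?_)
  calc M = ⁅M, M⁆ := (h.commutator_eq_self hM).symm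
    _ ≤ _root_.commutator Q := commutator_mono le_top le_top
    _ ≤ centralizer (M : Set Q) := hcomm

theorem map_conj_le_centralizer [Finite Q] [M.Normal] (hK : IsMinimalNormalIn K M)
    (hy : y ∉ normalizer (K : Set Q)) :
    K.map (MulAut.conj y).toMonoidHom ≤ centralizer (K : Set Q) := by
  set K' := K.map (MulAut.conj y).toMonoidHom
  have hM : M.map (MulAut.conj y).toMonoidHom = M :=
    mem_normalizer_iff_map_conj_eq.1 (le_normalizer_of_normal (mem_top y))
  have hK'M : K' ≤ M := hM ▸ map_mono hK.le
  have hMK' : M ≤ normalizer (K' : Set Q) := by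
    rw [← hM]
    exact (map_mono hK.le_normalizer).trans (le_normalizer_map _)
  have hdisjoint : K ⊓ K' = ⊥ := by
    by_contra hne
    have hle : K ≤ K' := inf_eq_left.1 <| hK.eq_of_le _ inf_le_left
      ((le_inf hK.le_normalizer hMK').trans inf_normalizer_le_normalizer_inf) hne
    refine hy (mem_normalizer_iff_map_conj_eq.2 (eq_of_le_of_card_ge hle ?_).symm)
    exact Nat.le_of_dvd Nat.card_pos (card_map_dvd K _)
  refine commutator_eq_bot_iff_le_centralizer.1 (le_bot_iff.1 (hdisjoint ▸ le_inf ?_ ?_))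
  · exact le_normalizer_iff_commutator_le_right.1 (hK'M.trans hK.le_normalizer)
  · exact le_normalizer_iff_commutator_le_left.1 (hK.le.trans hMK')

theorem le_centralizer_sup [Finite Q] (hM : IsMinimalNormalIn M ⊤) (hK : IsMinimalNormalIn K M) :
    M ≤ centralizer (K : Set Q) ⊔ K := by
  have := hM.normal
  rw [← hM.normalClosure_eq hK.le hK.ne_bot, normalClosure, closure_le]
  intro z hz
  obtain ⟨x, hx, hconj⟩ := Group.mem_conjugatesOfSet_iff.1 hz
  obtain ⟨y, rfl⟩ := isConj_iff.1 hconj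
  by_cases hy : y ∈ normalizer (K : Set Q)
  · exact mem_sup_right ((mem_normalizer_iff.1 hy x).1 hx)
  · exact mem_sup_left (hK.map_conj_le_centralizer hy (mem_map_of_mem _ hx))

theorem commutator_ne_bot [Finite Q] (hM : IsMinimalNormalIn M ⊤) (hK : IsMinimalNormalIn K M)
    (hcent : centralizer (M : Set Q) = ⊥) : ⁅K, K⁆ ≠ ⊥ := by
  intro hcomm
  have hMK := hM.le_centralizer_sup hK
  rw [sup_eq_left.2 (commutator_eq_bot_iff_le_centralizer.1 hcomm), le_centralizer_iff,
    hcent] at hMK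
  exact hK.ne_bot (le_bot_iff.1 hMK)

theorem normalCore_centralizer_eq_bot (hM : IsMinimalNormalIn M ⊤) (hKM : K ≤ M) (hne : K ≠ ⊥)
    (hcent : centralizer (M : Set Q) = ⊥) : (centralizer (K : Set Q)).normalCore = ⊥ := by
  rw [← le_bot_iff, ← hcent, le_centralizer_iff, ← hM.normalClosure_eq hKM hne]
  exact normalClosure_le_normal (le_centralizer_iff.1 (normalCore_le _))

end IsMinimalNormalIn

theorem zpowers_inf_le_normalCore [M.Normal] (hMH : M ≤ normalizer (H : Set Q))
    (hMg : M ⊔ zpowers g = ⊤) : zpowers g ⊓ H ≤ H.normalCore := by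
  rintro z ⟨hzg, hzH⟩ y
  have hy : y ∈ M ⊔ zpowers g := hMg ▸ mem_top y
  obtain ⟨m, hm, w, hw, rfl⟩ := mem_sup_of_normal_left.1 hy
  have hwz : w * z * w⁻¹ = z := mul_inv_eq_iff_eq_mul.2 (setLike_mul_comm hw hzg)
  have hconj : m * w * z * (m * w)⁻¹ = m * z * m⁻¹ := by
    rw [← congrArg (fun a => m * a * m⁻¹) hwz]
    group
  rw [hconj]
  exact (mem_normalizer_iff.1 (hMH hm) z).1 hzH

theorem IsMinimalNormalIn.zpowers_inf_centralizer_eq_bot (hM : IsMinimalNormalIn M ⊤)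
    (hK : IsMinimalNormalIn K M) (hcent : centralizer (M : Set Q) = ⊥)
    (hMg : M ⊔ zpowers g = ⊤) : zpowers g ⊓ centralizer (K : Set Q) = ⊥ := by
  have := hM.normal
  rw [← le_bot_iff, ← hM.normalCore_centralizer_eq_bot hK.le hK.ne_bot hcent]
  exact zpowers_inf_le_normalCore
    (hK.le_normalizer.trans (normalizer_le_normalizer_centralizer K)) hMg

theorem normal_of_le_of_sup_zpowers_eq_top [M.Normal] (hMH : M ≤ H) (hMg : M ⊔ zpowers g = ⊤) :
    H.Normal :=
  Normal.of_commutator_le Q <|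
    (Normal.commutator_le_of_self_sup_commutative_eq_top hMg inferInstance).trans hMH

theorem index_dvd_iff_pow_mem [H.Normal] (hHg : H ⊔ zpowers g = ⊤) (j : ℕ) :
    H.index ∣ j ↔ g ^ j ∈ H := by
  rw [← relIndex_top_right, ← hHg, relIndex_sup_zpowers, orderOf_dvd_iff_pow_eq_one,
    ← QuotientGroup.mk_pow, QuotientGroup.eq_one_iff]

theorem IsMinimalNormalIn.pow_eq_one (hM : IsMinimalNormalIn M ⊤) [Finite M] (hcomm : ⁅M, M⁆ = ⊥)
    {p : ℕ} [Fact p.Prime] (hp : p ∣ Nat.card M) {x : Q} (hx : x ∈ M) : x ^ p = 1 := by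
  have := hM.normal
  have commute {a b : Q} (ha : a ∈ M) (hb : b ∈ M) : Commute a b :=
    (mem_centralizer_iff.1 (commutator_eq_bot_iff_le_centralizer.1 hcomm ha) b hb).symm
  let torsion : Subgroup Q :=
    { carrier := {a | a ∈ M ∧ a ^ p = 1}
      one_mem' := ⟨M.one_mem, one_pow p⟩
      mul_mem' := fun ha hb => ⟨M.mul_mem ha.1 hb.1, by
        rw [(commute ha.1 hb.1).mul_pow, ha.2, hb.2, one_mul]⟩
      inv_mem' := fun ha => ⟨M.inv_mem ha.1, by rw [inv_pow, ha.2, inv_one]⟩ }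
  have : torsion.Normal := ⟨fun a ha y => ⟨this.conj_mem a ha.1 y, by rw [conj_pow, ha.2]; group⟩⟩
  obtain ⟨a, ha⟩ := exists_prime_orderOf_dvd_card' p hp
  have hne : torsion ≠ ⊥ := by
    refine fun hbot => (Fact.out : p.Prime).ne_one ?_
    have hmem : (a : Q) ∈ torsion := ⟨a.2, by rw [← coe_pow, ← ha, pow_orderOf_eq_one, coe_one]⟩
    rw [hbot, mem_bot, OneMemClass.coe_eq_one] at hmem
    rw [← ha, hmem, orderOf_one]
  have heq : torsion = M := hM.eq_of_normal (fun _ h => h.1) hne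
  exact (heq ▸ hx : x ∈ torsion).2

end MinimalNormal

/-! ### Abelian minimal normal subgroups -/

section ScalarSubgroup

variable {k G V : Type*} [Field k] [Group G] [AddCommGroup V] [Module k V]
  {ρ : Representation k G V}

/-- The elements of `G` that act on `V` as scalars; when `V` affords an irreducible character `χ`
this is the center `Z(χ)`. -/
def scalarSubgroup (ρ : Representation k G V) : Subgroup G where
  carrier := {x | ∃ c : k, ρ x = c • 1}
  one_mem' := ⟨1, by rw [map_one, one_smul]⟩
  mul_mem' := fun ⟨a, ha⟩ ⟨b, hb⟩ =>
    ⟨a * b, by rw [map_mul, ha, hb, smul_mul_smul_comm, mul_one]⟩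
  inv_mem' := by
    rintro x ⟨c, hc⟩
    have hinv : c • ρ x⁻¹ = 1 := by
      rw [← one_mul (ρ x⁻¹), ← smul_mul_assoc, ← hc, ← map_mul, mul_inv_cancel, map_one]
    rcases eq_or_ne c 0 with rfl | hc0
    · exact ⟨0, by rw [← mul_one (ρ x⁻¹), ← hinv, zero_smul, mul_zero, zero_smul]⟩
    · exact ⟨c⁻¹, by rw [← hinv, inv_smul_smul₀ hc0]⟩

lemma mem_scalarSubgroup {x : G} : x ∈ scalarSubgroup ρ ↔ ∃ c : k, ρ x = c • 1 :=
  Iff.rfl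

lemma actsByScalars_scalarSubgroup (ρ : Representation k G V) :
    ActsByScalars ρ (scalarSubgroup ρ) :=
  fun _ => mem_scalarSubgroup.1

instance normal_scalarSubgroup (ρ : Representation k G V) : (scalarSubgroup ρ).Normal := by
  refine ⟨?_⟩
  rintro x ⟨c, hc⟩ y
  exact ⟨c, by rw [map_mul, map_mul, hc, mul_smul_comm, mul_one, smul_mul_assoc, ← map_mul,
    mul_inv_cancel, map_one]⟩

lemma trace_conj (ρ : Representation k G V) (x y : G) :
    LinearMap.trace k V (ρ (y * x * y⁻¹)) = LinearMap.trace k V (ρ x) := by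
  rw [map_mul, LinearMap.trace_mul_comm, ← map_mul, inv_mul_cancel_left]

lemma trace_eq_zero_of_commutator_mem_scalarSubgroup [IsAlgClosed k] [FiniteDimensional k V]
    {M : Subgroup G} (hM : IsMinimalStable ρ M ⊤) {x : G}
    (hx : ∀ y ∈ M, ⁅y, x⁆ ∈ scalarSubgroup ρ) (hxρ : x ∉ scalarSubgroup ρ) :
    LinearMap.trace k V (ρ x) = 0 := by
  by_contra htrace
  refine hxρ (hM.exists_eq_smul_one (ρ x) fun y hy => ?_)
  obtain ⟨c, hc⟩ := hx y hy
  have hconj : ρ (y * x * y⁻¹) = c • ρ x := by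
    rw [← one_mul (ρ x), ← smul_mul_assoc, ← hc, ← map_mul, commutatorElement_def,
      inv_mul_cancel_right]
  have hc1 : c = 1 := by
    refine mul_right_cancel₀ htrace ?_
    rw [← smul_eq_mul, ← map_smul, ← hconj, trace_conj, one_mul]
  rw [hc1, one_smul] at hconj
  conv_lhs => rw [← hconj]
  rw [← map_mul, ← map_mul, inv_mul_cancel_right]

end ScalarSubgroup

section CosetRepresentatives

variable {k G V : Type*} [Field k] [Group G] [AddCommGroup V] [Module k V] [FiniteDimensional k V]
  {ρ : Representation k G V} {N : Subgroup G} [N.Normal] {A : Subgroup (G ⧸ N)}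

lemma linearIndependent_out [CharZero k] [Nontrivial V]
    (htrace : ∀ x : G, (x : G ⧸ N) ∈ A → x ∉ N → LinearMap.trace k V (ρ x) = 0) :
    LinearIndependent k fun a : A => ρ (Quotient.out a.1) := by
  rw [linearIndependent_iff']
  intro s c hsum b hb
  have htwist : ∑ a ∈ s, c a * LinearMap.trace k V (ρ (Quotient.out a.1 * (Quotient.out b.1)⁻¹)) =
      0 := by
    have := congrArg (fun T => LinearMap.trace k V (T * ρ (Quotient.out b.1)⁻¹)) hsum
    simpa only [Finset.sum_mul, map_sum, zero_mul, map_zero, smul_mul_assoc, map_smul,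
      smul_eq_mul, ← map_mul] using this
  rw [Finset.sum_eq_single_of_mem b hb, mul_inv_cancel, map_one, LinearMap.trace_one] at htwist
  · exact (mul_eq_zero.1 htwist).resolve_right (Nat.cast_ne_zero.2 finrank_pos.ne')
  · intro a _ hab
    have hmk : ((Quotient.out a.1 * (Quotient.out b.1)⁻¹ : G) : G ⧸ N) = (a * b⁻¹ : A) := by
      rw [QuotientGroup.mk_mul, QuotientGroup.mk_inv, QuotientGroup.out_eq', QuotientGroup.out_eq']
      rfl
    rw [htrace _ (hmk ▸ (a * b⁻¹).2), mul_zero]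
    rwa [← QuotientGroup.eq_one_iff, hmk, OneMemClass.coe_eq_one, mul_inv_eq_one]

lemma span_range_out_eq_top [IsAlgClosed k] (hN : ActsByScalars ρ N)
    (hA : IsMinimalStable ρ (A.comap (QuotientGroup.mk' N)) ⊤) :
    Submodule.span k (Set.range fun a : A => ρ (Quotient.out a.1)) = ⊤ := by
  rw [eq_top_iff, ← hA.span_image_eq_top, Submodule.span_le]
  rintro _ ⟨x, hx, rfl⟩
  obtain ⟨c, hc⟩ := hN _ (QuotientGroup.eq.1 (QuotientGroup.out_eq' (x : G ⧸ N)))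
  have hρx : ρ x = c • ρ (Quotient.out (x : G ⧸ N)) := by
    rw [← mul_one (ρ (Quotient.out _)), ← mul_smul_comm, ← hc, ← map_mul, mul_inv_cancel_left]
  rw [hρx]
  exact Submodule.smul_mem _ c (Submodule.subset_span ⟨⟨x, hx⟩, rfl⟩)

theorem natCard_eq_finrank_sq [IsAlgClosed k] [CharZero k] (hN : ActsByScalars ρ N)
    (hA : IsMinimalStable ρ (A.comap (QuotientGroup.mk' N)) ⊤)
    (htrace : ∀ x : G, (x : G ⧸ N) ∈ A → x ∉ N → LinearMap.trace k V (ρ x) = 0) :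
    Nat.card A = finrank k V ^ 2 := by
  have := hA.nontrivial
  rw [← finrank_eq_nat_card_basis
    (Basis.mk (linearIndependent_out htrace) (span_range_out_eq_top hN hA).ge),
    finrank_linearMap, sq]

end CosetRepresentatives

section AbelianMinimalNormal

variable {k G V : Type*} [Field k] [IsAlgClosed k] [CharZero k] [Group G] [AddCommGroup V]
  [Module k V] [FiniteDimensional k V] {ρ : Representation k G V}

theorem orderOf_mul_finrank_dvd_of_commutator_eq_bot [(scalarSubgroup ρ).FiniteIndex]
    {A : Subgroup (G ⧸ scalarSubgroup ρ)} (hA : IsMinimalNormalIn A ⊤) (hcomm : ⁅A, A⁆ = ⊥)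
    (hAV : IsMinimalStable ρ (A.comap (QuotientGroup.mk' (scalarSubgroup ρ))) ⊤) (g : G) :
    orderOf (g : G ⧸ scalarSubgroup ρ) * finrank k V ∣ (scalarSubgroup ρ).index := by
  have := hA.normal
  have hcard : Nat.card A = finrank k V ^ 2 := by
    refine natCard_eq_finrank_sq (actsByScalars_scalarSubgroup ρ) hAV fun x hx => ?_
    refine trace_eq_zero_of_commutator_mem_scalarSubgroup hAV fun y hy => ?_
    rw [← QuotientGroup.eq_one_iff, ← Subgroup.mem_bot, ← hcomm]
    exact Subgroup.commutator_mem_commutator (Subgroup.mem_comap.1 hy) hx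
  obtain ⟨p, hp, hpA⟩ := Nat.exists_prime_and_dvd (mt Subgroup.card_eq_one.1 hA.ne_bot)
  have : Fact p.Prime := ⟨hp⟩
  have horder : orderOf (g : G ⧸ scalarSubgroup ρ) ∣ A.index * p := by
    rw [orderOf_dvd_iff_pow_eq_one, pow_mul]
    exact hA.pow_eq_one hcomm hpA (A.pow_index_mem _)
  have hpV : p ∣ finrank k V := hp.dvd_of_dvd_pow (hcard ▸ hpA)
  calc orderOf (g : G ⧸ scalarSubgroup ρ) * finrank k V
      ∣ A.index * finrank k V * finrank k V :=
        mul_dvd_mul_right (horder.trans (mul_dvd_mul_left _ hpV)) _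
    _ = A.index * Nat.card A := by rw [hcard]; ring
    _ = (scalarSubgroup ρ).index := A.index_mul_card

end AbelianMinimalNormal

/-! ### Nonabelian minimal normal subgroups that are not simple -/

section Averaging

variable {k Γ W : Type*} [CommRing k] [Group Γ] [AddCommGroup W] [Module k W] [Fintype Γ]
  [Invertible (Fintype.card Γ : k)] (σ : Representation k Γ W)

lemma averageMap_apply (w : W) : σ.averageMap w = ⅟(Fintype.card Γ : k) • ∑ a, σ a w := by
  simp only [Representation.averageMap, GroupAlgebra.average, map_smul, map_sum,
    Representation.asAlgebraHom_of, LinearMap.smul_apply, LinearMap.sum_apply]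

lemma averageMap_mem {U : Submodule k W} {w : W} (hU : ∀ a, σ a w ∈ U) : σ.averageMap w ∈ U := by
  rw [averageMap_apply]
  exact U.smul_mem _ (U.sum_mem fun a _ => hU a)

lemma map_averageMap {φ : W →ₗ[k] k} {w : W} (hφ : ∀ a, φ (σ a w) = φ w) :
    φ (σ.averageMap w) = φ w := by
  rw [averageMap_apply, map_smul, map_sum, Finset.sum_congr rfl fun a _ => hφ a, Finset.sum_const,
    Finset.card_univ, nsmul_eq_mul, smul_eq_mul, invOf_mul_cancel_left]

end Averaging

section ConjugationAverage

variable {k G V : Type*} [Field k] [Group G] [AddCommGroup V] [Module k V]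
  {ρ : Representation k G V} {N : Subgroup G} [N.Normal]

/-- The action of `G ⧸ N` on `End V` by conjugation through `ρ`, for `N` acting by scalars. -/
noncomputable def conjugation (hN : ActsByScalars ρ N) :
    Representation k (G ⧸ N) (V →ₗ[k] V) :=
  QuotientGroup.lift N (Representation.linHom ρ ρ) fun x hx => by
    obtain ⟨c, hc⟩ := hN x hx
    refine LinearMap.ext fun T => ?_
    calc ρ x * (T * ρ x⁻¹) = T * (ρ x * ρ x⁻¹) := by
          rw [hc, smul_mul_assoc, smul_mul_assoc, one_mul, one_mul, mul_smul_comm]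
      _ = T := by rw [← map_mul, mul_inv_cancel, map_one, mul_one]

lemma conjugation_mk (hN : ActsByScalars ρ N) (x : G) (T : V →ₗ[k] V) :
    conjugation hN x T = ρ x * T * ρ x⁻¹ :=
  (mul_assoc (ρ x) T (ρ x⁻¹)).symm

variable (K : Subgroup (G ⧸ N)) [Fintype K] [Invertible (Fintype.card K : k)]

/-- The mean of the conjugates of `T : End V` under a finite subgroup `K` of `G ⧸ N`; this projects
`End V` onto the operators commuting with the preimage of `K`. -/
noncomputable def conjugationAverage (hN : ActsByScalars ρ N) : (V →ₗ[k] V) →ₗ[k] V →ₗ[k] V :=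
  Representation.averageMap ((conjugation hN).comp K.subtype)

variable {K} (hN : ActsByScalars ρ N)

lemma commute_conjugationAverage (T : V →ₗ[k] V) {x : G} (hx : (x : G ⧸ N) ∈ K) :
    Commute (ρ x) (conjugationAverage K hN T) := by
  have hinv : ρ x * conjugationAverage K hN T * ρ x⁻¹ = conjugationAverage K hN T :=
    (conjugation_mk hN x _).symm.trans
      (Representation.averageMap_invariant ((conjugation hN).comp K.subtype) T ⟨x, hx⟩)
  rw [Commute, SemiconjBy]
  conv_rhs => rw [← hinv]
  rw [mul_assoc _ (ρ x⁻¹), ← map_mul, inv_mul_cancel, map_one, mul_one]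

lemma commute_conjugationAverage_of_commute {S T : V →ₗ[k] V}
    (hS : ∀ x : G, (x : G ⧸ N) ∈ K → Commute (ρ x) S) (hST : Commute S T) :
    Commute S (conjugationAverage K hN T) := by
  suffices hmem : conjugationAverage K hN T ∈ (Subalgebra.centralizer k {S}).toSubmodule from
    Subalgebra.mem_centralizer_iff k |>.1 hmem S rfl
  refine averageMap_mem _ ?_
  rintro ⟨a, ha⟩
  obtain ⟨x, rfl⟩ := QuotientGroup.mk_surjective a
  change conjugation hN x T ∈ Subalgebra.centralizer k {S}
  rw [conjugation_mk, Subalgebra.mem_centralizer_iff]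
  rintro _ rfl
  exact ((hS x ha).symm.mul_right hST).mul_right (hS x⁻¹ (K.inv_mem ha)).symm

lemma trace_conjugationAverage_mul {S T : V →ₗ[k] V}
    (hST : ∀ x : G, (x : G ⧸ N) ∈ K →
      LinearMap.trace k V (ρ x * T * ρ x⁻¹ * S) = LinearMap.trace k V (T * S)) :
    LinearMap.trace k V (conjugationAverage K hN T * S) = LinearMap.trace k V (T * S) := by
  refine map_averageMap ((conjugation hN).comp K.subtype)
    (φ := LinearMap.trace k V ∘ₗ LinearMap.mulRight k S) ?_
  rintro ⟨a, ha⟩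
  obtain ⟨x, rfl⟩ := QuotientGroup.mk_surjective a
  change LinearMap.trace k V (conjugation hN x T * S) = LinearMap.trace k V (T * S)
  rw [conjugation_mk, hST x ha]

lemma trace_conjugationAverage_mul_of_commute {S : V →ₗ[k] V}
    (hS : ∀ x : G, (x : G ⧸ N) ∈ K → Commute (ρ x) S) (T : V →ₗ[k] V) :
    LinearMap.trace k V (conjugationAverage K hN T * S) = LinearMap.trace k V (T * S) := by
  refine trace_conjugationAverage_mul hN fun x hx => ?_
  rw [mul_assoc, (hS x⁻¹ (K.inv_mem hx)).eq, ← mul_assoc, LinearMap.trace_mul_comm, ← mul_assoc,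
    ← mul_assoc, ← map_mul, inv_mul_cancel, map_one, one_mul]

end ConjugationAverage

section CentralizerOfPerfect

variable {k G V : Type*} [Field k] [Group G] [AddCommGroup V] [Module k V]
  {ρ : Representation k G V} {N : Subgroup G} [N.Normal] {K : Subgroup (G ⧸ N)}

-- The preimages commute modulo the central subgroup `ρ N`, so this is the three subgroups lemma.
lemma commute_of_mem_centralizer (hN : ActsByScalars ρ N) (hK : ⁅K, K⁆ = K) {x y : G}
    (hx : (x : G ⧸ N) ∈ K) (hy : (y : G ⧸ N) ∈ Subgroup.centralizer (K : Set (G ⧸ N))) :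
    Commute (ρ x) (ρ y) := by
  set f := ρ.asGroupHom
  set q := QuotientGroup.mk' N
  set K' := K.comap q
  set L' := (Subgroup.centralizer (K : Set (G ⧸ N))).comap q
  have hcenter : N.map f ≤ Subgroup.center _ := by
    rintro _ ⟨n, hn, rfl⟩
    obtain ⟨c, hc⟩ := hN n hn
    refine Subgroup.mem_center_iff.2 fun T => Units.ext ?_
    rw [Units.val_mul, Units.val_mul, Representation.asGroupHom_apply, hc, mul_smul_comm, mul_one,
      smul_mul_assoc, one_mul]
  have hLK : ⁅L'.map f, K'.map f⁆ ≤ N.map f := by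
    rw [← Subgroup.map_commutator]
    refine Subgroup.map_mono (Subgroup.commutator_le.2 fun l hl a ha => ?_)
    rw [← QuotientGroup.eq_one_iff]
    exact commutatorElement_eq_one_iff_mul_comm.2 (Subgroup.mem_centralizer_iff.1 hl _ ha).symm
  have hbot (A : Subgroup (V →ₗ[k] V)ˣ) : ⁅N.map f, A⁆ = ⊥ :=
    Subgroup.commutator_eq_bot_iff_le_centralizer.2
      (hcenter.trans (Subgroup.center_le_centralizer _))
  have hrot : ⁅⁅K'.map f, K'.map f⁆, L'.map f⁆ = ⊥ := by
    refine Subgroup.commutator_commutator_eq_bot_of_rotate ?_ ?_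
    · rw [Subgroup.commutator_comm (K'.map f), eq_bot_iff, ← hbot (K'.map f)]
      exact Subgroup.commutator_mono hLK le_rfl
    · rw [eq_bot_iff, ← hbot (K'.map f)]
      exact Subgroup.commutator_mono hLK le_rfl
  have hK' : K' ≤ ⁅K', K'⁆ ⊔ N := by
    rw [← QuotientGroup.ker_mk' N, ← Subgroup.comap_map_eq, Subgroup.map_commutator,
      Subgroup.map_comap_eq_self_of_surjective (QuotientGroup.mk'_surjective N), hK]
  have hle : ⁅K', K'⁆ ⊔ N ≤ (Subgroup.centralizer (L'.map f : Set (V →ₗ[k] V)ˣ)).comap f := by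
    refine sup_le ?_ (Subgroup.map_le_iff_le_comap.1
      (hcenter.trans (Subgroup.center_le_centralizer _)))
    rw [← Subgroup.map_le_iff_le_comap, Subgroup.map_commutator]
    exact Subgroup.commutator_eq_bot_iff_le_centralizer.1 hrot
  exact congrArg Units.val
    (Subgroup.mem_centralizer_iff.1 (hle (hK' hx)) (f y) ⟨y, hy, rfl⟩).symm

lemma exists_eq_mul_of_mem_centralizer_sup {m : G}
    (hm : (m : G ⧸ N) ∈ Subgroup.centralizer (K : Set (G ⧸ N)) ⊔ K) :
    ∃ l x : G, (l : G ⧸ N) ∈ Subgroup.centralizer (K : Set (G ⧸ N)) ∧ (x : G ⧸ N) ∈ K ∧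
      m = l * x := by
  rw [← SetLike.mem_coe, Subgroup.coe_mul_of_right_le_normalizer_left _ _
    (Subgroup.le_normalizer.trans (normalizer_le_normalizer_centralizer K))] at hm
  obtain ⟨l, hl, a, ha, hla⟩ := Set.mem_mul.1 hm
  obtain ⟨x, rfl⟩ := QuotientGroup.mk_surjective a
  refine ⟨m * x⁻¹, x, ?_, ha, (inv_mul_cancel_right m x).symm⟩
  rwa [QuotientGroup.mk_mul, QuotientGroup.mk_inv, ← hla, mul_inv_cancel_right]

lemma eq_zero_of_forall_trace_mul_eq_zero [FiniteDimensional k V] {T : V →ₗ[k] V}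
    (hT : ∀ S, LinearMap.trace k V (T * S) = 0) : T = 0 := by
  refine LinearMap.ext fun v => (Module.forall_dual_apply_eq_zero_iff k _).1 fun φ => ?_
  have hsmul : T * φ.smulRight v = φ.smulRight (T v) :=
    LinearMap.ext fun w => T.map_smul (φ w) v
  rw [← LinearMap.trace_smulRight, ← hsmul, hT]

variable [FiniteDimensional k V] [IsAlgClosed k]

lemma exists_conjugationAverage_eq_smul_one [Fintype K] [Invertible (Fintype.card K : k)]
    (hN : ActsByScalars ρ N) (hKK : ⁅K, K⁆ = K)
    (hV : IsMinimalStable ρ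
      ((Subgroup.centralizer (K : Set (G ⧸ N)) ⊔ K).comap (QuotientGroup.mk' N)) ⊤)
    {x : G} (hx : (x : G ⧸ N) ∈ K) : ∃ c : k, conjugationAverage K hN (ρ x) = c • 1 := by
  refine hV.exists_eq_smul_one _ fun m hm => ?_
  obtain ⟨l, y, hl, hy, rfl⟩ := exists_eq_mul_of_mem_centralizer_sup hm
  have hcomm := commute_conjugationAverage_of_commute hN
    (fun z hz => commute_of_mem_centralizer hN hKK hz hl)
    (commute_of_mem_centralizer hN hKK hx hl).symm
  rw [map_mul]
  exact hcomm.symm.mul_right (commute_conjugationAverage hN _ hy).symm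

lemma eq_zero_of_forall_trace_mul_centralizer_eq_zero [Fintype K]
    [Invertible (Fintype.card K : k)]
    (hN : ActsByScalars ρ N) (hKK : ⁅K, K⁆ = K)
    (hV : IsMinimalStable ρ
      ((Subgroup.centralizer (K : Set (G ⧸ N)) ⊔ K).comap (QuotientGroup.mk' N)) ⊤)
    {T : V →ₗ[k] V}
    (hT : ∀ x : G, (x : G ⧸ N) ∈ K → Commute (ρ x) T)
    (htrace : ∀ l : G, (l : G ⧸ N) ∈ Subgroup.centralizer (K : Set (G ⧸ N)) →
      LinearMap.trace k V (T * ρ l) = 0) : T = 0 := by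
  refine eq_zero_of_forall_trace_mul_eq_zero fun S => ?_
  have hS : S ∈ Submodule.span k (ρ '' _) := hV.span_image_eq_top ▸ Submodule.mem_top
  refine Submodule.span_le (p := LinearMap.ker (LinearMap.trace k V ∘ₗ LinearMap.mulLeft k T)) |>.2
    ?_ hS
  rintro _ ⟨m, hm, rfl⟩
  obtain ⟨l, x, hl, hx, rfl⟩ := exists_eq_mul_of_mem_centralizer_sup hm
  obtain ⟨c, hc⟩ := exists_conjugationAverage_eq_smul_one hN hKK hV hx
  have hcomm (z : G) (hz : (z : G ⧸ N) ∈ K) : Commute (ρ z) (T * ρ l) :=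
    (hT z hz).mul_right (commute_of_mem_centralizer hN hKK hz hl)
  calc LinearMap.trace k V (T * ρ (l * x))
      = LinearMap.trace k V (ρ x * (T * ρ l)) := by
        rw [map_mul ρ, ← mul_assoc, LinearMap.trace_mul_comm]
    _ = LinearMap.trace k V (conjugationAverage K hN (ρ x) * (T * ρ l)) :=
        (trace_conjugationAverage_mul_of_commute hN hcomm _).symm
    _ = 0 := by rw [hc, smul_mul_assoc, one_mul, map_smul, htrace l hl, smul_zero]

theorem exists_mem_centralizer_trace_mul_ne_zero [CharZero k] [Finite K]
    (hN : ActsByScalars ρ N) (hKK : ⁅K, K⁆ = K)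
    (hV : IsMinimalStable ρ
      ((Subgroup.centralizer (K : Set (G ⧸ N)) ⊔ K).comap (QuotientGroup.mk' N)) ⊤)
    {h : G} {S : V →ₗ[k] V}
    (hS : ∀ x : G, (x : G ⧸ N) ∈ K →
      LinearMap.trace k V (ρ x * ρ h * ρ x⁻¹ * S) = LinearMap.trace k V (ρ h * S))
    (hhS : LinearMap.trace k V (ρ h * S) ≠ 0) :
    ∃ l : G, (l : G ⧸ N) ∈ Subgroup.centralizer (K : Set (G ⧸ N)) ∧
      LinearMap.trace k V (ρ (h * l)) ≠ 0 := by
  have := Fintype.ofFinite K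
  have := invertibleOfNonzero (Nat.cast_ne_zero (R := k).2 (Fintype.card_ne_zero (α := K)))
  by_contra! hzero
  have havg : conjugationAverage K hN (ρ h) = 0 := by
    refine eq_zero_of_forall_trace_mul_centralizer_eq_zero hN hKK hV
      (fun x => commute_conjugationAverage hN _) fun l hl => ?_
    rw [trace_conjugationAverage_mul_of_commute hN
      (fun x hx => commute_of_mem_centralizer hN hKK hx hl), ← map_mul, hzero l hl]
  rw [← trace_conjugationAverage_mul hN hS, havg, zero_mul, map_zero] at hhS
  exact hhS rfl

end CentralizerOfPerfect

section TraceOfPower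

open Subgroup

variable {k G V : Type*} [Field k] [Group G] [AddCommGroup V] [Module k V]
  {ρ : Representation k G V}

lemma inv_mul_mul_pow_mem {L : Subgroup G} {x g : G} {n : ℕ} (hn : n ≠ 0)
    (hL : ∀ i, 0 < i → i < n → g ^ i * x * (g ^ i)⁻¹ ∈ L) :
    x⁻¹ * (x * g) ^ n * (g ^ n)⁻¹ ∈ L := by
  induction n, Nat.one_le_iff_ne_zero.2 hn using Nat.le_induction with
  | base => simp
  | succ n hpos ih =>
    have hmul := L.mul_mem (ih (by lia) fun i hi hin => hL i hi (by lia)) (hL n hpos (by lia))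
    convert hmul using 1
    rw [pow_succ (x * g), pow_succ g]
    group

-- With `c = (x g) ^ n`, which commutes with `x g`, one has `c g c⁻¹ = (c x⁻¹ c⁻¹) x g`, and the
-- hypothesis allows replacing `c` by `x g ^ n` in the first factor.
lemma trace_conj_pow_mul {x g : G} {n : ℕ}
    (h : Commute (ρ (x⁻¹ * (x * g) ^ n * (g ^ n)⁻¹)) (ρ (g ^ n * x⁻¹ * (g ^ n)⁻¹))) :
    LinearMap.trace k V (ρ (x * g ^ n * x⁻¹ * (g ^ n)⁻¹ * g)) = LinearMap.trace k V (ρ g) := by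
  set c := (x * g) ^ n
  set z := g ^ n * x⁻¹ * (g ^ n)⁻¹ with hz
  set l := x⁻¹ * c * (g ^ n)⁻¹ with hl
  have hcg : c * g * c⁻¹ = x * (l * z) * l⁻¹ * g := by
    have hcomm : c * (x * g) = x * g * c := pow_mul_comm' (x * g) n
    calc c * g * c⁻¹ = c * x⁻¹ * (c⁻¹ * (c * (x * g))) * c⁻¹ := by group
      _ = x * (l * z) * l⁻¹ * g := by rw [hcomm, hl, hz]; group
  have hlz : ρ (x * (l * z) * l⁻¹ * g) = ρ (x * (z * l) * l⁻¹ * g) := by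
    simp only [map_mul, h.eq]
  rw [← trace_conj ρ g c, hcg, hlz]
  congr 2
  rw [hz]
  group

end TraceOfPower

section NormalizerOfFactor

open Subgroup

variable {k G V : Type*} [Field k] [IsAlgClosed k] [CharZero k] [Group G] [AddCommGroup V]
  [Module k V] [FiniteDimensional k V] {ρ : Representation k G V} {N : Subgroup G} [N.Normal]
  {M K : Subgroup (G ⧸ N)} {g : G} [Finite (G ⧸ N)]

theorem exists_mem_centralizer_trace_pow_index_mul_ne_zero (hN : ActsByScalars ρ N)
    (hM : IsMinimalNormalIn M ⊤) (hK : IsMinimalNormalIn K M)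
    (hcent : centralizer (M : Set (G ⧸ N)) = ⊥) (hMg : M ⊔ zpowers (g : G ⧸ N) = ⊤)
    (hMV : IsMinimalStable ρ (M.comap (QuotientGroup.mk' N)) ⊤)
    (hg : LinearMap.trace k V (ρ g) ≠ 0) :
    ∃ l : G, (l : G ⧸ N) ∈ centralizer (K : Set (G ⧸ N)) ∧
      LinearMap.trace k V (ρ (g ^ (normalizer (K : Set (G ⧸ N))).index * l)) ≠ 0 := by
  have := hM.normal
  have := normal_of_le_of_sup_zpowers_eq_top hK.le_normalizer hMg
  have hKK := hK.commutator_eq_self (hM.commutator_ne_bot hK hcent)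
  set n := (normalizer (K : Set (G ⧸ N))).index
  have hpow (j : ℕ) : n ∣ j ↔ (g : G ⧸ N) ^ j ∈ normalizer (K : Set (G ⧸ N)) :=
    index_dvd_iff_pow_mem (eq_top_mono (sup_le_sup_right hK.le_normalizer _) hMg) j
  refine exists_mem_centralizer_trace_mul_ne_zero (S := ρ ((g ^ n)⁻¹ * g)) hN hKK
    (hMV.top_of_le (comap_mono (hM.le_centralizer_sup hK))) (fun x hx => ?_) ?_
  · have hl : x⁻¹ * (x * g) ^ n * (g ^ n)⁻¹ ∈ (centralizer (K : Set (G ⧸ N))).comap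
        (QuotientGroup.mk' N) :=
      inv_mul_mul_pow_mem FiniteIndex.index_ne_zero fun i hi hin =>
        hK.map_conj_le_centralizer (mt (hpow i).2 (Nat.not_dvd_of_pos_of_lt hi hin))
          ⟨x, hx, rfl⟩
    have hz : ((g ^ n * x⁻¹ * (g ^ n)⁻¹ : G) : G ⧸ N) ∈ K :=
      (mem_normalizer_iff.1 ((hpow n).1 dvd_rfl) _).1 (K.inv_mem hx)
    simpa only [← map_mul, ← mul_assoc, mul_inv_cancel, one_mul] using
      trace_conj_pow_mul (commute_of_mem_centralizer hN hKK hz hl).symm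
  · rwa [← map_mul, mul_inv_cancel_left]

end NormalizerOfFactor

section InductionStep

open Subgroup

variable {G V : Type} [Group G] [AddCommGroup V] [Module ℂ V] [FiniteDimensional ℂ V]
  {ρ : Representation ℂ G V} {N : Subgroup G} [N.Normal]

lemma RelativeDivisibility.of_lt {n m : ℕ} (ih : ∀ m < n, ScalarDivisibility m) (hm : m < n) :
    RelativeDivisibility m := by
  rcases eq_or_ne m 0 with rfl | hm0
  · rintro G V _ _ _ _ ρ N _ _ hN
    exact absurd hN FiniteIndex.index_ne_zero
  · exact .of_scalarDivisibility fun d hd =>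
      ih d ((Nat.le_of_dvd (Nat.pos_of_ne_zero hm0) hd).trans_lt hm)

lemma IsMinimalStable.finrank_dvd_relIndex [N.FiniteIndex] {L : Subgroup G} {W : Submodule ℂ V}
    (hW : IsMinimalStable ρ L W) (hN : ActsByScalars ρ N)
    (h : ScalarDivisibility (N.relIndex L)) : finrank ℂ W ∣ N.relIndex L := by
  have hdvd := h L W hW.isStable.representation (N.subgroupOf L) rfl
    hW.isMinimalStable_representation (fun x hx => ?_) 1 ?_
  · rwa [QuotientGroup.mk_one, orderOf_one, one_mul] at hdvd
  · obtain ⟨c, hc⟩ := hN x hx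
    refine ⟨c, LinearMap.ext fun v => Subtype.ext ?_⟩
    rw [hW.isStable.coe_representation_apply]
    exact LinearMap.congr_fun hc v
  · rw [map_one, LinearMap.trace_one]
    exact Nat.cast_ne_zero.2 hW.finrank_pos.ne'

theorem orderOf_mul_finrank_dvd_relIndex [N.FiniteIndex]
    (ih : ∀ m < N.index, ScalarDivisibility m) (hN : ActsByScalars ρ N) {L H : Subgroup G}
    [(L.subgroupOf H).Normal] (hNL : N ≤ L) (hLH : L ≤ H) (hH : H ≠ ⊤)
    (hHV : IsMinimalStable ρ H ⊤) {u : H} (hu : LinearMap.trace ℂ V (ρ u) ≠ 0) :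
    orderOf (u : H ⧸ L.subgroupOf H) * finrank ℂ V ∣ N.relIndex H := by
  obtain ⟨W, -, hW⟩ := exists_isMinimalStable_le ρ L hHV.ne_bot isStable_top
  have : L.FiniteIndex := finiteIndex_of_le hNL
  have hHlt : N.relIndex H < N.index := relIndex_lt_index (hNL.trans hLH) hH
  have hLlt : L.relIndex H < N.index :=
    (relIndex_le_of_le_left hNL FiniteIndex.index_ne_zero).trans_lt hHlt
  have hHV' : IsMinimalStable (ρ.comp H.subtype) ⊤ ⊤ := by
    rwa [← subgroupOf_self, isMinimalStable_comp_subtype_iff le_rfl]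
  have hrel := RelativeDivisibility.of_lt ih hLlt H V (ρ.comp H.subtype) (L.subgroupOf H) rfl hHV'
    W ((isMinimalStable_comp_subtype_iff hLH).2 hW) u hu
  refine hrel.trans ?_
  rw [← relIndex_mul_relIndex N L H hNL hLH, mul_comm]
  refine mul_dvd_mul_right (hW.finrank_dvd_relIndex hN (ih _ ?_)) _
  exact relIndex_lt_index hNL (ne_top_of_le_ne_top hH hLH)

variable {M K : Subgroup (G ⧸ N)} {g : G}

lemma orderOf_mk_dvd_orderOf_mk_mul {H L : Subgroup G} [(L.subgroupOf H).Normal]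
    {h l : H} (hl : (l : G) ∈ L) (hLN : ∀ j : ℕ, (h : G) ^ j ∈ L → (h : G) ^ j ∈ N) :
    orderOf ((h : G) : G ⧸ N) ∣ orderOf ((h * l : H) : H ⧸ L.subgroupOf H) := by
  rw [QuotientGroup.mk_mul, (QuotientGroup.eq_one_iff l).2 hl, mul_one, orderOf_dvd_iff_pow_eq_one,
    ← QuotientGroup.mk_pow, QuotientGroup.eq_one_iff]
  refine hLN _ ?_
  rw [← coe_pow, ← mem_subgroupOf, ← QuotientGroup.eq_one_iff, QuotientGroup.mk_pow,
    pow_orderOf_eq_one]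

theorem orderOf_mul_finrank_dvd_of_not_normal [N.FiniteIndex]
    (ih : ∀ m < N.index, ScalarDivisibility m) (hN : ActsByScalars ρ N)
    (hM : IsMinimalNormalIn M ⊤) (hK : IsMinimalNormalIn K M) (hKn : ¬ K.Normal)
    (hcent : centralizer (M : Set (G ⧸ N)) = ⊥) (hMg : M ⊔ zpowers (g : G ⧸ N) = ⊤)
    (hMV : IsMinimalStable ρ (M.comap (QuotientGroup.mk' N)) ⊤)
    (hg : LinearMap.trace ℂ V (ρ g) ≠ 0) :
    orderOf (g : G ⧸ N) * finrank ℂ V ∣ N.index := by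
  have := hM.normal
  have := normal_of_le_of_sup_zpowers_eq_top hK.le_normalizer hMg
  obtain ⟨l, hl, hlg⟩ := exists_mem_centralizer_trace_pow_index_mul_ne_zero hN hM hK hcent hMg
    hMV hg
  set q := QuotientGroup.mk' N
  set H := (normalizer (K : Set (G ⧸ N))).comap q
  set L := (centralizer (K : Set (G ⧸ N))).comap q
  have hq : Function.Surjective q := QuotientGroup.mk'_surjective N
  have hH : H.index = (normalizer (K : Set (G ⧸ N))).index := index_comap_of_surjective _ hq
  rw [← hH] at hlg
  have hNL : N ≤ L := QuotientGroup.le_comap_mk' N _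
  have hLH : L ≤ H := comap_mono (centralizer_le_normalizer _)
  have hHne : H ≠ ⊤ := fun htop => hKn <| normalizer_eq_top_iff.1 <|
    comap_injective hq (htop.trans (comap_top q).symm)
  have : (L.subgroupOf H).Normal := normal_subgroupOf_of_le_normalizer
    ((comap_mono (normalizer_le_normalizer_centralizer K)).trans (le_normalizer_comap q))
  let h : H := ⟨g ^ H.index, H.pow_index_mem g⟩
  have horder := orderOf_mk_dvd_orderOf_mk_mul (N := N) (L := L) (h := h) (l := ⟨l, hLH hl⟩) hl
    fun j hj => by
      rw [← QuotientGroup.eq_one_iff, ← mem_bot,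
        ← hM.zpowers_inf_centralizer_eq_bot hK hcent hMg]
      exact ⟨⟨H.index * j, by simp [h, zpow_mul]⟩, hj⟩
  have hpow : orderOf (g : G ⧸ N) ∣ H.index * orderOf ((h : G) : G ⧸ N) := by
    rw [orderOf_dvd_iff_pow_eq_one, pow_mul, ← QuotientGroup.mk_pow, pow_orderOf_eq_one]
  calc orderOf (g : G ⧸ N) * finrank ℂ V
      ∣ H.index * (orderOf ((h : G) : G ⧸ N) * finrank ℂ V) := by
        rw [← mul_assoc]; exact mul_dvd_mul_right hpow _
    _ ∣ H.index * N.relIndex H := mul_dvd_mul_left _ <| (mul_dvd_mul_right horder _).trans <|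
        orderOf_mul_finrank_dvd_relIndex ih hN hNL hLH hHne
          (hMV.top_of_le (comap_mono hK.le_normalizer)) hlg
    _ = N.index := by rw [mul_comm, relIndex_mul_index (hNL.trans hLH)]

end InductionStep

/-! ### Simplicity in the category of representations -/

section CategoricalSimplicity

open CategoryTheory

universe u v

variable {k : Type u} {G : Type v} [Field k] [Group G] {X Y : FDRep k G}

/-- The linear map underlying a morphism of finite-dimensional representations. -/
abbrev linearMapOfHom (f : X ⟶ Y) : X →ₗ[k] Y := f.hom.hom.hom

lemma linearMapOfHom_apply_ρ (f : X ⟶ Y) (g : G) (x : X) :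
    linearMapOfHom f (X.ρ g x) = Y.ρ g (linearMapOfHom f x) :=
  ConcreteCategory.congr_hom ((forget (FGModuleCat k)).congr_map (f.comm g)) x

lemma eq_zero_of_linearMapOfHom_eq_zero {f : X ⟶ Y} (h : linearMapOfHom f = 0) : f = 0 := by
  ext x
  exact LinearMap.congr_fun h x

variable (k G) in
/-- The functor sending a representation to its underlying vector space; through it `FDRep k G`
inherits monomorphisms and isomorphisms from `ModuleCat k`. -/
abbrev forgetToModuleCat : FDRep k G ⥤ ModuleCat k :=
  Action.forget (FGModuleCat k) G ⋙ forget₂ (FGModuleCat k) (ModuleCat k)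

lemma mono_iff_injective_linearMapOfHom (f : X ⟶ Y) :
    Mono f ↔ Function.Injective (linearMapOfHom f) := by
  rw [← (forgetToModuleCat k G).mono_map_iff_mono, ModuleCat.mono_iff_injective]
  rfl

lemma isIso_iff_bijective_linearMapOfHom (f : X ⟶ Y) :
    IsIso f ↔ Function.Bijective (linearMapOfHom f) := by
  rw [← isIso_iff_of_reflects_iso f (forgetToModuleCat k G), ConcreteCategory.isIso_iff_bijective]
  rfl

lemma isStable_ker_linearMapOfHom (f : X ⟶ Y) (S : Subgroup G) :
    IsStable X.ρ S (linearMapOfHom f).ker := by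
  intro g _ v hv
  rw [LinearMap.mem_ker] at hv ⊢
  rw [linearMapOfHom_apply_ρ, hv, map_zero]

lemma isStable_range_linearMapOfHom (f : X ⟶ Y) (S : Subgroup G) :
    IsStable Y.ρ S (linearMapOfHom f).range := by
  rintro g _ _ ⟨x, rfl⟩
  exact ⟨X.ρ g x, linearMapOfHom_apply_ρ f g x⟩

/-- The inclusion of a stable subspace, as a morphism of representations. -/
noncomputable def subrepresentationInclusion {V : FDRep k G} (U : Subrepresentation V.ρ) :
    FDRep.of U.toRepresentation ⟶ V :=
  ⟨InducedCategory.homMk (ModuleCat.ofHom U.toSubmodule.subtype), fun _ => rfl⟩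

lemma isMinimalStable_of_simple (V : FDRep k G) [Simple V] : IsMinimalStable V.ρ ⊤ ⊤ where
  ne_bot h := by
    refine id_nonzero V (eq_zero_of_linearMapOfHom_eq_zero (LinearMap.ext fun x => ?_))
    have hx : x ∈ (⊤ : Submodule k V) := Submodule.mem_top
    rw [h] at hx
    exact (Submodule.mem_bot k).1 hx
  isStable := isStable_top
  eq_of_le U _ hU hne := by
    let ι := subrepresentationInclusion (V := V) ⟨U, fun g => hU g (Subgroup.mem_top g)⟩
    have hmono : Mono ι := (mono_iff_injective_linearMapOfHom ι).2 U.injective_subtype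
    have hι : ι ≠ 0 := fun h0 => hne <| by
      rw [← U.range_subtype]
      exact LinearMap.range_eq_bot.2 (congrArg linearMapOfHom h0)
    have hsurj := ((isIso_iff_bijective_linearMapOfHom ι).1 (isIso_of_mono_of_nonzero hι)).2
    rw [← U.range_subtype]
    exact LinearMap.range_eq_top.2 hsurj

lemma simple_of_isMinimalStable {V : FDRep k G} (h : IsMinimalStable V.ρ ⊤ ⊤) : Simple V where
  mono_isIso_iff_nonzero {Y} f _ := by
    have := h.nontrivial
    rw [isIso_iff_bijective_linearMapOfHom]
    refine ⟨fun hbij h0 => ?_, fun hne => ⟨(mono_iff_injective_linearMapOfHom f).1 ‹_›, ?_⟩⟩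
    · obtain ⟨v, hv⟩ := exists_ne (0 : V)
      obtain ⟨y, rfl⟩ := hbij.2 v
      exact hv (LinearMap.congr_fun (congrArg linearMapOfHom h0) y)
    · exact LinearMap.range_eq_top.1 <| h.eq_top (isStable_range_linearMapOfHom f ⊤)
        fun h0 => hne (eq_zero_of_linearMapOfHom_eq_zero (LinearMap.range_eq_bot.1 h0))

lemma injective_linearMapOfHom_of_simple [Simple X] {f : X ⟶ Y} (hf : f ≠ 0) :
    Function.Injective (linearMapOfHom f) := by
  rw [← LinearMap.ker_eq_bot]
  by_contra hker
  have htop := (isMinimalStable_of_simple X).eq_top (isStable_ker_linearMapOfHom f ⊤) hker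
  exact hf (eq_zero_of_linearMapOfHom_eq_zero (LinearMap.ker_eq_top.1 htop))

lemma isMinimalStable_range_linearMapOfHom [Simple X] {f : X ⟶ Y} (hf : f ≠ 0) :
    IsMinimalStable Y.ρ ⊤ (linearMapOfHom f).range where
  ne_bot h := hf (eq_zero_of_linearMapOfHom_eq_zero (LinearMap.range_eq_bot.1 h))
  isStable := isStable_range_linearMapOfHom f ⊤
  eq_of_le U hU hst hne := by
    have hmap : (U.comap (linearMapOfHom f)).map (linearMapOfHom f) = U :=
      Submodule.map_comap_eq_self hU
    have hcomap : U.comap (linearMapOfHom f) = ⊤ := by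
      refine (isMinimalStable_of_simple X).eq_top (fun g hg v hv => ?_) fun h0 => hne ?_
      · rw [Submodule.mem_comap, linearMapOfHom_apply_ρ]
        exact hst g hg _ hv
      · rw [← hmap, h0, Submodule.map_bot]
    rw [← hmap, hcomap, LinearMap.range_eq_map]

end CategoricalSimplicity

/-! ### Simple minimal normal subgroups -/

section SolvableResidual

open Subgroup

variable (Γ : Type*) [Group Γ]

lemma exists_solvableResidual_eq_derivedSeries [Finite Γ] :
    ∃ n, solvableResidual Γ = derivedSeries Γ n := by
  obtain ⟨n, hn⟩ := WellFoundedLT.antitone_chain_condition (derivedSeries_antitone Γ)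
  refine ⟨n, le_antisymm (iInf_le _ n) (le_iInf fun m => ?_)⟩
  rw [hn _ (le_max_left n m)]
  exact derivedSeries_antitone Γ (le_max_right n m)

variable {Γ} {Q : Type*} [Group Q] {M : Subgroup Q} {φ : Γ →* Q}

lemma le_map_derivedSeries (hφ : Function.Surjective φ) (hM : ⁅M, M⁆ = M) (n : ℕ) :
    M ≤ (derivedSeries Γ n).map φ := by
  rw [map_derivedSeries_eq hφ]
  induction n with
  | zero => exact le_top
  | succ n ih => exact hM.ge.trans (commutator_mono ih ih)

lemma le_map_solvableResidual [Finite Γ] (hφ : Function.Surjective φ) (hM : ⁅M, M⁆ = M) :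
    M ≤ (solvableResidual Γ).map φ := by
  obtain ⟨n, hn⟩ := exists_solvableResidual_eq_derivedSeries Γ
  exact hn ▸ le_map_derivedSeries hφ hM n

end SolvableResidual

section UnimodularLift

open Subgroup

variable {k G V : Type*} [Field k] [Group G] [AddCommGroup V] [Module k V]

/-- The group `Γ` of pairs `(gZ, u)`, where `Z` is the subgroup acting by scalars and `u` is a
scalar multiple of `ρ g` of determinant `1`. It is a central extension of `G ⧸ Z` with a faithful
representation on `V`, and it is finite when `G ⧸ Z` is, even if `G` is not. -/
def unimodularLift (ρ : Representation k G V) :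
    Subgroup ((G ⧸ scalarSubgroup ρ) × (Module.End k V)ˣ) where
  carrier := {p | LinearMap.det (p.2 : Module.End k V) = 1 ∧
    ∃ (g : G) (c : kˣ), p.1 = g ∧ (p.2 : Module.End k V) = c • ρ g}
  one_mem' := ⟨by simp, 1, 1, rfl, by simp⟩
  mul_mem' := by
    rintro p q ⟨hp, g, c, hg, hc⟩ ⟨hq, h, d, hh, hd⟩
    refine ⟨?_, g * h, c * d, ?_, ?_⟩
    · rw [Prod.snd_mul, Units.val_mul, map_mul, hp, hq, mul_one]
    · rw [Prod.fst_mul, hg, hh, QuotientGroup.mk_mul]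
    · rw [Prod.snd_mul, Units.val_mul, hc, hd, smul_mul_smul_comm, map_mul]
  inv_mem' := by
    rintro p ⟨hp, g, c, hg, hc⟩
    refine ⟨?_, g⁻¹, c⁻¹, by rw [Prod.fst_inv, hg, QuotientGroup.mk_inv], ?_⟩
    · have hdet := congrArg LinearMap.det p.2.mul_inv
      rwa [map_mul, hp, one_mul, map_one] at hdet
    · refine Units.inv_eq_of_mul_eq_one_right ?_
      rw [hc, smul_mul_smul_comm, ← map_mul, mul_inv_cancel, mul_inv_cancel, one_smul, map_one]

namespace unimodularLift

variable (ρ : Representation k G V)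

/-- The projection of the lift onto `G ⧸ Z`. -/
def toQuotient : unimodularLift ρ →* G ⧸ scalarSubgroup ρ :=
  (MonoidHom.fst _ _).comp (unimodularLift ρ).subtype

/-- The tautological representation of the lift on `V`. -/
def representation : Representation k (unimodularLift ρ) V :=
  (Units.coeHom _).comp ((MonoidHom.snd _ _).comp (unimodularLift ρ).subtype)

variable {ρ}

lemma det_representation (γ : unimodularLift ρ) : LinearMap.det (representation ρ γ) = 1 :=
  γ.2.1

section Nontrivial

variable [Nontrivial V]

lemma exists_representation_eq_smul {γ : unimodularLift ρ} {g : G} (h : toQuotient ρ γ = g) :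
    ∃ c : k, c ≠ 0 ∧ representation ρ γ = c • ρ g := by
  obtain ⟨p, hdet, x, c, hx, hc⟩ := γ
  obtain ⟨b, hb⟩ : g⁻¹ * x ∈ scalarSubgroup ρ := QuotientGroup.eq.1 (h.symm.trans hx)
  have hp : (p.2 : Module.End k V) = ((c : k) * b) • ρ g := by
    rw [hc, ← mul_inv_cancel_left g x, map_mul, hb, mul_smul_comm, mul_one, mul_smul]
    rfl
  refine ⟨c * b, fun h0 => p.2.ne_zero ?_, hp⟩
  rw [hp, h0, zero_smul]

lemma representation_injective : Function.Injective (representation ρ) := by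
  rw [injective_iff_map_eq_one]
  intro γ hγ
  obtain ⟨g, hg⟩ := QuotientGroup.mk_surjective (toQuotient ρ γ)
  obtain ⟨c, hc, hcg⟩ := exists_representation_eq_smul hg.symm
  have hgZ : g ∈ scalarSubgroup ρ := ⟨c⁻¹, by rw [← hγ, hcg, inv_smul_smul₀ hc]⟩
  exact Subtype.ext (Prod.ext (hg.symm.trans ((QuotientGroup.eq_one_iff g).2 hgZ)) (Units.ext hγ))

lemma toQuotient_surjective [IsAlgClosed k] [FiniteDimensional k V] :
    Function.Surjective (toQuotient ρ) := by
  intro q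
  obtain ⟨g, rfl⟩ := QuotientGroup.mk_surjective q
  have hdet : LinearMap.det (ρ g) ≠ 0 := (((Group.isUnit g).map ρ).map LinearMap.det).ne_zero
  obtain ⟨c, hc⟩ := IsAlgClosed.exists_pow_nat_eq (LinearMap.det (ρ g))⁻¹
    (finrank_pos (R := k) (M := V))
  have hc0 : c ≠ 0 := by
    rintro rfl
    rw [zero_pow finrank_pos.ne', eq_comm, inv_eq_zero] at hc
    exact hdet hc
  have hunit : IsUnit (c • ρ g) := ((Group.isUnit g).map ρ).smul (Units.mk0 c hc0)
  refine ⟨⟨(↑g, hunit.unit), ?_, g, Units.mk0 c hc0, rfl, rfl⟩, rfl⟩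
  change LinearMap.det (c • ρ g) = 1
  rw [LinearMap.det_smul, hc, inv_mul_cancel₀ hdet]

lemma exists_pow_eq_one_of_mem_ker {γ : unimodularLift ρ} (h : γ ∈ (toQuotient ρ).ker) :
    ∃ c : k, c ^ finrank k V = 1 ∧ representation ρ γ = c • 1 := by
  obtain ⟨c, -, hc⟩ := exists_representation_eq_smul (g := 1) h
  rw [map_one] at hc
  refine ⟨c, ?_, hc⟩
  rw [← det_representation γ, hc, LinearMap.det_smul, map_one, mul_one]

lemma finite_ker_toQuotient [FiniteDimensional k V] :
    Finite (toQuotient ρ).ker := by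
  choose f hf hfρ using fun γ : (toQuotient ρ).ker => exists_pow_eq_one_of_mem_ker γ.2
  have hroots : {c : k | c ^ finrank k V = 1}.Finite :=
    (Polynomial.nthRootsFinset _ (1 : k)).finite_toSet.subset fun c hc =>
      (Polynomial.mem_nthRootsFinset finrank_pos 1).2 hc
  have := hroots.to_subtype
  refine Finite.of_injective (fun γ => (⟨f γ, hf γ⟩ : {c : k | c ^ finrank k V = 1}))
    fun γ γ' h => Subtype.ext (representation_injective ?_)
  rw [hfρ, hfρ, Subtype.mk.inj h]

lemma finite [IsAlgClosed k] [FiniteDimensional k V] [(scalarSubgroup ρ).FiniteIndex] :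
    Finite (unimodularLift ρ) := by
  have := finite_ker_toQuotient (ρ := ρ)
  have : Finite (unimodularLift ρ ⧸ (toQuotient ρ).ker) := Finite.of_equiv _
    (QuotientGroup.quotientKerEquivOfSurjective _ toQuotient_surjective).symm.toEquiv
  exact Finite.of_subgroup_quotient (toQuotient ρ).ker

end Nontrivial

section Center

variable [IsAlgClosed k] [FiniteDimensional k V]

lemma center_eq_ker_toQuotient (hV : IsMinimalStable ρ ⊤ ⊤) :
    center (unimodularLift ρ) = (toQuotient ρ).ker := by
  have := hV.nontrivial
  ext γ
  rw [mem_center_iff]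
  refine ⟨fun hγ => ?_, fun hγ δ => ?_⟩
  · obtain ⟨x, hx⟩ := QuotientGroup.mk_surjective (toQuotient ρ γ)
    obtain ⟨c, hc, hcx⟩ := exists_representation_eq_smul hx.symm
    rw [MonoidHom.mem_ker, ← hx, QuotientGroup.eq_one_iff]
    refine hV.exists_eq_smul_one (ρ x) fun y _ => ?_
    obtain ⟨δ, hδ⟩ := toQuotient_surjective (ρ := ρ) y
    obtain ⟨b, hb, hby⟩ := exists_representation_eq_smul hδ
    have hcomm := congrArg (representation ρ) (hγ δ)
    rw [map_mul, map_mul, hby, hcx, smul_mul_smul_comm, smul_mul_smul_comm, mul_comm c b] at hcomm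
    exact (smul_right_injective _ (mul_ne_zero hb hc) hcomm).symm
  · obtain ⟨c, -, hc⟩ := exists_pow_eq_one_of_mem_ker hγ
    refine representation_injective ?_
    rw [map_mul, map_mul, hc, smul_mul_assoc, mul_smul_comm, one_mul, mul_one]

/-- The lift is a central extension of `G ⧸ Z` whose center is the full kernel. -/
noncomputable def quotientCenterEquiv (hV : IsMinimalStable ρ ⊤ ⊤) :
    unimodularLift ρ ⧸ center (unimodularLift ρ) ≃* G ⧸ scalarSubgroup ρ :=
  have := hV.nontrivial
  (QuotientGroup.quotientMulEquivOfEq (center_eq_ker_toQuotient hV)).trans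
    (QuotientGroup.quotientKerEquivOfSurjective _ toQuotient_surjective)

lemma quotientCenterEquiv_mk (hV : IsMinimalStable ρ ⊤ ⊤) (γ : unimodularLift ρ) :
    quotientCenterEquiv hV γ = toQuotient ρ γ :=
  rfl

variable {M : Subgroup (G ⧸ scalarSubgroup ρ)}

lemma isMinimalStable_solvableResidual [Finite (unimodularLift ρ)]
    (hM : ⁅M, M⁆ = M) (hMV : IsMinimalStable ρ (M.comap (QuotientGroup.mk' _)) ⊤) :
    IsMinimalStable (representation ρ) (solvableResidual (unimodularLift ρ)) ⊤ := by
  have := hMV.nontrivial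
  refine ⟨hMV.ne_bot, isStable_top, fun U _ hU hne => hMV.eq_top (fun x hx v hv => ?_) hne⟩
  obtain ⟨δ, hδ, hδx⟩ := le_map_solvableResidual toQuotient_surjective hM hx
  obtain ⟨c, hc, hcx⟩ := exists_representation_eq_smul hδx
  have hmem := U.smul_mem c⁻¹ (hU δ hδ v hv)
  rwa [hcx, LinearMap.smul_apply, inv_smul_smul₀ hc] at hmem

lemma solvableResidual_sup_center_sup_zpowers [Finite (unimodularLift ρ)]
    (hV : IsMinimalStable ρ ⊤ ⊤) (hM : ⁅M, M⁆ = M) {γ : unimodularLift ρ}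
    (hMγ : M ⊔ zpowers (toQuotient ρ γ) = ⊤) :
    solvableResidual (unimodularLift ρ) ⊔ center (unimodularLift ρ) ⊔ zpowers γ = ⊤ := by
  have := hV.nontrivial
  rw [sup_right_comm, center_eq_ker_toQuotient hV, ← comap_map_eq, Subgroup.map_sup,
    MonoidHom.map_zpowers, eq_top_iff, ← comap_top (toQuotient ρ), ← hMγ]
  exact comap_mono (sup_le_sup_right (le_map_solvableResidual toQuotient_surjective hM) _)

end Center

end unimodularLift

end UnimodularLift

section SimpleCase

open Subgroup

lemma exists_isSimpleGroup_normal_of_mulEquiv {Q R : Type*} [Group Q] [Group R] (e : Q ≃* R)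
    {M : Subgroup Q} [M.Normal] [IsSimpleGroup M] (hM : ⁅M, M⁆ ≠ ⊥)
    (hcent : centralizer (M : Set Q) = ⊥) :
    ∃ S : Subgroup R, S.Normal ∧ IsSimpleGroup S ∧ (∃ a b : S, a * b ≠ b * a) ∧
      centralizer (S : Set R) = ⊥ := by
  refine ⟨M.map e.toMonoidHom, ‹M.Normal›.map _ e.surjective,
    (e.subgroupMap M).symm.isSimpleGroup, ?_, eq_bot_iff.2 fun z hz => ?_⟩
  · by_contra! hcomm
    refine hM (commutator_eq_bot_iff_le_centralizer.2 fun x hx y hy => e.injective ?_)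
    have hxy := hcomm (e.subgroupMap M ⟨y, hy⟩) (e.subgroupMap M ⟨x, hx⟩)
    rw [map_mul, map_mul]
    exact congrArg Subtype.val hxy
  · have hz' : e.symm z ∈ centralizer (M : Set Q) := fun x hx => e.injective <| by
      simpa only [map_mul, e.apply_symm_apply] using hz (e x) (mem_map_of_mem e.toMonoidHom hx)
    rw [hcent, mem_bot, map_eq_one_iff e.symm e.symm.injective] at hz'
    exact hz'

variable {G V : Type} [Group G] [AddCommGroup V] [Module ℂ V] [FiniteDimensional ℂ V]
  {ρ : Representation ℂ G V} {M : Subgroup (G ⧸ scalarSubgroup ρ)}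

lemma orderOf_mul_finrank_dvd_of_isSimpleGroup (hyp : Conjecture21)
    [(scalarSubgroup ρ).FiniteIndex] [M.Normal] [IsSimpleGroup M] (hM : ⁅M, M⁆ = M)
    (hcent : centralizer (M : Set (G ⧸ scalarSubgroup ρ)) = ⊥) {g : G}
    (hMg : M ⊔ zpowers (g : G ⧸ scalarSubgroup ρ) = ⊤)
    (hMV : IsMinimalStable ρ (M.comap (QuotientGroup.mk' _)) ⊤)
    (hg : LinearMap.trace ℂ V (ρ g) ≠ 0) :
    orderOf (g : G ⧸ scalarSubgroup ρ) * finrank ℂ V ∣ (scalarSubgroup ρ).index := by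
  have hV : IsMinimalStable ρ ⊤ ⊤ := hMV.top_of_le le_top
  have := hV.nontrivial
  have := unimodularLift.finite (ρ := ρ)
  have hM0 : M ≠ ⊥ := M.nontrivial_iff_ne_bot.1 inferInstance
  let e := unimodularLift.quotientCenterEquiv hV
  obtain ⟨γ, hγ⟩ := unimodularLift.toQuotient_surjective (ρ := ρ) g
  obtain ⟨c, hc, hcg⟩ := unimodularLift.exists_representation_eq_smul hγ
  have hres := unimodularLift.isMinimalStable_solvableResidual hM hMV
  have hdvd := hyp (unimodularLift ρ)
    (exists_isSimpleGroup_normal_of_mulEquiv e.symm (hM.trans_ne hM0) hcent)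
    (FDRep.of (unimodularLift.representation ρ))
    (simple_of_isMinimalStable (hres.top_of_le le_top)) unimodularLift.representation_injective
    (simple_of_isMinimalStable ?_) γ ?_
    (unimodularLift.solvableResidual_sup_center_sup_zpowers hV hM (hγ ▸ hMg))
  · have hindex : (center (unimodularLift ρ)).index = (scalarSubgroup ρ).index :=
      Nat.card_congr e.toEquiv
    have horder : orderOf (γ : unimodularLift ρ ⧸ center (unimodularLift ρ)) =
        orderOf (g : G ⧸ scalarSubgroup ρ) := by
      rw [← hγ, ← unimodularLift.quotientCenterEquiv_mk hV, MulEquiv.orderOf_eq]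
    rwa [hindex, horder] at hdvd
  · rw [← subgroupOf_self]
    exact (isMinimalStable_comp_subtype_iff le_rfl).2 hres
  · change LinearMap.trace ℂ V (unimodularLift.representation ρ γ) ≠ 0
    rw [hcg, map_smul, smul_eq_mul]
    exact mul_ne_zero hc hg

end SimpleCase

/-! ### The induction -/

section Induction

open Subgroup

lemma lt_comap_mk' {G : Type*} [Group G] {N : Subgroup G} [N.Normal] {A : Subgroup (G ⧸ N)}
    (hA : A ≠ ⊥) : N < A.comap (QuotientGroup.mk' N) := by
  rw [← bot_lt_iff_ne_bot] at hA
  simpa only [MonoidHom.comap_bot, QuotientGroup.ker_mk'] using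
    (comap_lt_comap_of_surjective (QuotientGroup.mk'_surjective N)).2 hA

lemma sup_zpowers_mk_eq_top {G : Type*} [Group G] {N : Subgroup G} [N.Normal]
    {A : Subgroup (G ⧸ N)} {g : G} (h : A.comap (QuotientGroup.mk' N) ⊔ zpowers g = ⊤) :
    A ⊔ zpowers (g : G ⧸ N) = ⊤ := by
  have hmap := congrArg (Subgroup.map (QuotientGroup.mk' N)) h
  rwa [Subgroup.map_sup, map_comap_eq_self_of_surjective (QuotientGroup.mk'_surjective N),
    MonoidHom.map_zpowers, map_top_of_surjective _ (QuotientGroup.mk'_surjective N)] at hmap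

lemma IsMinimalStable.finrank_eq_one {k G V : Type*} [Field k] [Group G] [AddCommGroup V]
    [Module k V] {ρ : Representation k G V} {A : Subgroup G} (h : IsMinimalStable ρ A ⊤)
    (hA : ActsByScalars ρ A) : finrank k V = 1 := by
  have := h.nontrivial
  obtain ⟨v, hv⟩ := exists_ne (0 : V)
  have hspan : k ∙ v = ⊤ := by
    refine h.eq_top (fun x hx w hw => ?_) (mt Submodule.span_singleton_eq_bot.1 hv)
    obtain ⟨c, hc⟩ := hA x hx
    rw [hc]
    exact Submodule.smul_mem _ c hw
  rw [← finrank_top k V, ← hspan, finrank_span_singleton hv]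

variable {G V : Type} [Group G] [AddCommGroup V] [Module ℂ V] [FiniteDimensional ℂ V]
  {ρ : Representation ℂ G V} {g : G}

lemma sup_zpowers_eq_top_and_isMinimalStable {N M : Subgroup G} [N.Normal] [N.FiniteIndex]
    [M.Normal] (ih : ∀ m < N.index, ScalarDivisibility m) (hV : IsMinimalStable ρ ⊤ ⊤)
    (hN : ActsByScalars ρ N) (hg : LinearMap.trace ℂ V (ρ g) ≠ 0)
    (hndvd : ¬ orderOf (g : G ⧸ N) * finrank ℂ V ∣ N.index) (hNM : N < M) :
    M ⊔ zpowers g = ⊤ ∧ IsMinimalStable ρ M ⊤ := by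
  have : M.FiniteIndex := finiteIndex_of_le hNM.le
  have hrel : RelativeDivisibility M.index := .of_lt ih (index_strictAnti hNM)
  have hMg : M ⊔ zpowers g = ⊤ := by
    by_contra hMg
    exact hndvd (orderOf_mul_finrank_dvd_of_sup_zpowers_ne_top ih hrel hV hN hg hNM.le hMg)
  exact ⟨hMg, isMinimalStable_of_sup_zpowers_eq_top hrel hV hg hMg⟩

lemma orderOf_mul_finrank_dvd_of_commutator_ne_bot (hyp : Conjecture21)
    [(scalarSubgroup ρ).FiniteIndex] (ih : ∀ m < (scalarSubgroup ρ).index, ScalarDivisibility m)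
    {M : Subgroup (G ⧸ scalarSubgroup ρ)} (hM : IsMinimalNormalIn M ⊤) (hne : ⁅M, M⁆ ≠ ⊥)
    (hgen : ∀ C : Subgroup (G ⧸ scalarSubgroup ρ), C.Normal → C ≠ ⊥ →
      C ⊔ zpowers (g : G ⧸ scalarSubgroup ρ) = ⊤)
    (hMV : IsMinimalStable ρ (M.comap (QuotientGroup.mk' (scalarSubgroup ρ))) ⊤)
    (hg : LinearMap.trace ℂ V (ρ g) ≠ 0) :
    orderOf (g : G ⧸ scalarSubgroup ρ) * finrank ℂ V ∣ (scalarSubgroup ρ).index := by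
  have := hM.normal
  have hMg := hgen M hM.normal hM.ne_bot
  have hcent := hM.centralizer_eq_bot hne hgen
  obtain ⟨K, hK⟩ := exists_isMinimalNormalIn hM.ne_bot
  by_cases hKn : K.Normal
  · obtain rfl := hM.eq_of_normal hK.le hK.ne_bot
    have := hK.isSimpleGroup
    exact orderOf_mul_finrank_dvd_of_isSimpleGroup hyp (hM.commutator_eq_self hne) hcent hMg hMV hg
  · exact orderOf_mul_finrank_dvd_of_not_normal ih (actsByScalars_scalarSubgroup ρ) hM hK hKn hcent
      hMg hMV hg

lemma orderOf_mul_finrank_dvd_index_scalarSubgroup (hyp : Conjecture21)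
    [(scalarSubgroup ρ).FiniteIndex] (ih : ∀ m < (scalarSubgroup ρ).index, ScalarDivisibility m)
    (hV : IsMinimalStable ρ ⊤ ⊤) (hdim : finrank ℂ V ≠ 1) (hg : LinearMap.trace ℂ V (ρ g) ≠ 0) :
    orderOf (g : G ⧸ scalarSubgroup ρ) * finrank ℂ V ∣ (scalarSubgroup ρ).index := by
  have hN := actsByScalars_scalarSubgroup ρ
  by_contra hndvd
  have hgen (C : Subgroup (G ⧸ scalarSubgroup ρ)) [C.Normal] (hC : C ≠ ⊥) :=
    sup_zpowers_eq_top_and_isMinimalStable ih hV hN hg hndvd (lt_comap_mk' hC)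
  have htop : (⊤ : Subgroup (G ⧸ scalarSubgroup ρ)) ≠ ⊥ := fun h =>
    hdim (hV.finrank_eq_one fun x _ => hN x ((QuotientGroup.eq_one_iff x).1
      (mem_bot.1 (h ▸ mem_top (x : G ⧸ scalarSubgroup ρ)))))
  obtain ⟨M, hM⟩ := exists_isMinimalNormalIn htop
  have := hM.normal
  have hMV := (hgen M hM.ne_bot).2
  by_cases hcomm : ⁅M, M⁆ = ⊥
  · exact hndvd (orderOf_mul_finrank_dvd_of_commutator_eq_bot hM hcomm hMV g)
  · exact hndvd (orderOf_mul_finrank_dvd_of_commutator_ne_bot hyp ih hM hcomm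
      (fun C _ hC => sup_zpowers_mk_eq_top (hgen C hC).1) hMV hg)

theorem scalarDivisibility_of_conjecture21 (hyp : Conjecture21) (n : ℕ) :
    ScalarDivisibility n := by
  induction n using Nat.strong_induction_on with
  | _ n ih
  rintro G V _ _ _ _ ρ N _ _ rfl hV hN g hg
  by_cases hdim : finrank ℂ V = 1
  · rw [hdim, mul_one]
    exact orderOf_dvd_natCard _
  by_contra hndvd
  have hNS : N = scalarSubgroup ρ := by
    by_contra hne
    have hV' := (sup_zpowers_eq_top_and_isMinimalStable ih hV hN hg hndvd (lt_of_le_of_ne hN hne)).2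
    exact hdim (hV'.finrank_eq_one (actsByScalars_scalarSubgroup ρ))
  subst hNS
  exact hndvd (orderOf_mul_finrank_dvd_index_scalarSubgroup hyp ih hV hdim hg)

end Induction

end CosetDivisibility

open CosetDivisibility in
theorem orderOf_coset_mul_degree_dvd_of_conjecture21_general (hyp : Conjecture21)
    (G : Type) [Group G] (N : Subgroup G) [N.Normal] [N.FiniteIndex]
    (W : FDRep ℂ ↥N) (hW : CategoryTheory.Simple W)
    (V : FDRep ℂ G) (hV : CategoryTheory.Simple V)
    (hover : ∃ f : W ⟶ FDRep.of (V.ρ.comp N.subtype), f ≠ 0)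
    (g : G) (n : G) (hn : n ∈ N) (hne : V.character (g * n) ≠ 0) :
    orderOf (QuotientGroup.mk g : G ⧸ N) * Module.finrank ℂ V ∣
      N.index * Module.finrank ℂ W := by
  obtain ⟨f, hf⟩ := hover
  have hrange : IsMinimalStable V.ρ N (linearMapOfHom f).range := by
    rw [← isMinimalStable_comp_subtype_iff le_rfl, Subgroup.subgroupOf_self]
    exact isMinimalStable_range_linearMapOfHom hf
  have hdvd := RelativeDivisibility.of_scalarDivisibility
    (fun m _ => scalarDivisibility_of_conjecture21 hyp m) G V V.ρ N rfl
    (isMinimalStable_of_simple V) _ hrange (g * n) hne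
  rwa [QuotientGroup.mk_mul_of_mem g hn,
    LinearMap.finrank_range_of_inj (injective_linearMapOfHom_of_simple hf)] at hdvd

/-- **Theorem 2.2.** Assume Conjecture 2.1. Let `G` be a finite group,
`N ⊴ G`, `θ ∈ Irr(N)` (afforded by `W`), `χ ∈ Irr(G)` (afforded by `V`) lying over `θ`
(i.e. there is a nonzero `N`-homomorphism from `W` to the restriction of `V`), and
`g ∈ G` with `χ(gn) ≠ 0` for some `n ∈ N`. Then `o(gN)·χ(1)` divides `|G:N|·θ(1)`. -/
theorem orderOf_coset_mul_degree_dvd_of_conjecture21 (hyp : Conjecture21)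
    (G : Type) [Group G] [Finite G] (N : Subgroup G) [N.Normal]
    (W : FDRep ℂ ↥N) (hW : CategoryTheory.Simple W)
    (V : FDRep ℂ G) (hV : CategoryTheory.Simple V)
    (hover : ∃ f : W ⟶ FDRep.of (V.ρ.comp N.subtype), f ≠ 0)
    (g : G) (n : G) (hn : n ∈ N) (hne : V.character (g * n) ≠ 0) :
    orderOf (QuotientGroup.mk g : G ⧸ N) * Module.finrank ℂ V ∣
      N.index * Module.finrank ℂ W :=
  orderOf_coset_mul_degree_dvd_of_conjecture21_general hyp G N W hW V hV hover g n hn hne
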